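/- arXiv:1602.03586 — 4 statements merged into one kernel-verified Lean document; each statement's English description precedes it below -/
import Mathlib

section
/- Let s ≥ 2 and n ≥ 5 be integers and let ε be a constant with 0 < ε ≤ 1/(s²(2s+1)). Let P = (f_1,…,f_n) be a non-trivial protocol on C_n with s colours, let X be uniformly distributed on Fix(P), and let j be any index (indices modulo n). If f_{j−1}, f_j and f_{j+1} are semi-perfect functions and the pairs (X_{j−2}, X_j), (X_{j−1}, X_{j+1}) and (X_j, X_{j+2}) are (s², ε)-uniform, then f_j is a perfect function. -/
open Finset

/-- Base-`s` Shannon entropy of the random variable `g(X)` where `X` is uniformly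
distributed on the finite set `F`. -/
noncomputable def entOf (s : ℕ) {α β : Type} [DecidableEq β] [Fintype β]
    (F : Finset α) (g : α → β) : ℝ :=
  -∑ y : β, (((F.filter fun c => g c = y).card : ℝ) / (F.card : ℝ)) *
      Real.logb s (((F.filter fun c => g c = y).card : ℝ) / (F.card : ℝ))

/-- The fixed set of a protocol `f` on the cycle `C_n` with `s` colours:
all colourings `c` with `c i = f i (c (i-1), c (i+1))` for every vertex `i`
(vertex indices taken modulo `n`). -/
def cycleFix (n s : ℕ) [NeZero n] (f : ZMod n → Fin s × Fin s → Fin s) :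
    Finset (ZMod n → Fin s) :=
  Finset.univ.filter fun c => ∀ i, c i = f i (c (i - 1), c (i + 1))

/-- `h(i₁,…,i_k)`: entropy (base `s`) of the tuple of coordinates of `X ∈_u F`
indexed by the set `T` of integers (interpreted modulo `n`). -/
noncomputable def entT (n s : ℕ) [NeZero n] (F : Finset (ZMod n → Fin s))
    (T : Finset ℤ) : ℝ :=
  entOf s F (fun c => fun i : {x // x ∈ T} => c ((i.1 : ℤ) : ZMod n))

/-- `H_j^k = h(j,j+1,…,k-1) + h(j+1,j+2,…,k)`. -/
noncomputable def entH (n s : ℕ) [NeZero n] (F : Finset (ZMod n → Fin s))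
    (j k : ℤ) : ℝ :=
  entT n s F (Finset.Icc j (k - 1)) + entT n s F (Finset.Icc (j + 1) k)

/-- Base-`s` Shannon entropy of `g(U)` where `U` is distributed on the finite type
`α` with probability mass function `q`. -/
noncomputable def pEnt (s : ℕ) {α β : Type} [Fintype α] [DecidableEq β] [Fintype β]
    (q : α → ℝ) (g : α → β) : ℝ :=
  -∑ y : β, (∑ x ∈ Finset.univ.filter fun x => g x = y, q x) *
      Real.logb s (∑ x ∈ Finset.univ.filter fun x => g x = y, q x)

/-- The conditional mutual information `I(U₁; U₂ | f(U))` (base `s`), where the pair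
`U = (U₁, U₂)` has joint probability mass function `q` on `Z_s × Z_s`, computed via
`I(A;B|C) = H(A,C) + H(B,C) − H(A,B,C) − H(C)`. -/
noncomputable def condMI (s : ℕ) (f : Fin s × Fin s → Fin s)
    (q : Fin s × Fin s → ℝ) : ℝ :=
  pEnt s q (fun u => (u.1, f u)) + pEnt s q (fun u => (u.2, f u))
    - pEnt s q (fun u => (u.1, u.2, f u)) - pEnt s q f

/-- The uniform probability mass function on `Z_s × Z_s`. -/
noncomputable def unifPair (s : ℕ) : Fin s × Fin s → ℝ := fun _ => 1 / (s ^ 2 : ℝ)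

/-- A function `f : Z_s × Z_s → Z_s` is flat if every fibre has exactly `s` elements. -/
def IsFlat (s : ℕ) (f : Fin s × Fin s → Fin s) : Prop :=
  ∀ z : Fin s, (Finset.univ.filter fun u => f u = z).card = s

/-- A function `f : Z_s × Z_s → Z_s` is semi-perfect if it is flat and, for
`U = (U₁,U₂)` uniform on `Z_s × Z_s`, `I(U₁; U₂ | f(U)) = 0`. -/
def IsSemiPerfect (s : ℕ) (f : Fin s × Fin s → Fin s) : Prop :=
  IsFlat s f ∧ condMI s f (unifPair s) = 0

/-- The pair `(X_a, X_b)` of coordinates of `X ∈_u F` is `(s², ε)`-uniform, i.e. each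
value in `Z_s × Z_s` has probability within `ε` of `1/s²`. -/
def pairUnif (n s : ℕ) [NeZero n] (F : Finset (ZMod n → Fin s))
    (a b : ZMod n) (ε : ℝ) : Prop :=
  ∀ z : Fin s × Fin s,
    |((F.filter fun c => (c a, c b) = z).card : ℝ) / (F.card : ℝ)
      - 1 / (s ^ 2 : ℝ)| ≤ ε

/-- `L(f,z) = { x : f(x,y) = z for some y }`. -/
def Lset (s : ℕ) (f : Fin s × Fin s → Fin s) (z : Fin s) : Finset (Fin s) :=
  Finset.univ.filter fun x => ∃ y, f (x, y) = z

/-- `R(f,z) = { y : f(x,y) = z for some x }`. -/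
def Rset (s : ℕ) (f : Fin s × Fin s → Fin s) (z : Fin s) : Finset (Fin s) :=
  Finset.univ.filter fun y => ∃ x, f (x, y) = z

/-- `f` is perfect if it is semi-perfect and the cardinalities `|L(f,z)|` and
`|R(f,z)|` do not depend on `z`. -/
def IsPerfect (s : ℕ) (f : Fin s × Fin s → Fin s) : Prop :=
  IsSemiPerfect s f ∧ ∀ z z' : Fin s,
    (Lset s f z).card = (Lset s f z').card ∧ (Rset s f z).card = (Rset s f z').card

lemma pEnt_unif_aux (s : ℕ) {β : Type} [DecidableEq β] [Fintype β] (g : Fin s × Fin s → β) :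
    pEnt s (unifPair s) g = -∑ u : Fin s × Fin s, (1 / (s ^ 2 : ℝ)) *
      Real.logb s (((Finset.univ.filter fun v => g v = g u).card : ℝ) / (s ^ 2 : ℝ)) := by
  unfold pEnt unifPair
  congr 1
  rw [← Finset.sum_fiberwise Finset.univ g (fun u => (1 / (s ^ 2 : ℝ)) *
      Real.logb s (((Finset.univ.filter fun v => g v = g u).card : ℝ) / (s ^ 2 : ℝ)))]
  refine Finset.sum_congr rfl fun y _ => ?_
  rw [Finset.sum_mul]
  refine Finset.sum_congr rfl fun u hu => ?_
  have : g u = y := (Finset.mem_filter.1 hu).2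
  rw [this, Finset.sum_const, nsmul_eq_mul, mul_one_div]

lemma semi_rect (s : ℕ) (hs : 2 ≤ s) (f : Fin s × Fin s → Fin s) (h : IsSemiPerfect s f)
    (a b a' b' z : Fin s) (h1 : f (a, b') = z) (h2 : f (a', b) = z) : f (a, b) = z := by
  obtain ⟨hflat, hI⟩ := h
  have hs0 : (0 : ℝ) < s := by exact_mod_cast (by omega : 0 < s)
  have hs1 : (1 : ℝ) < s := by exact_mod_cast (by omega : 1 < s)
  unfold condMI at hI
  simp only [pEnt_unif_aux] at hI
  set r : Fin s → Fin s → ℕ := fun a z =>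
    (Finset.univ.filter fun v : Fin s × Fin s => (v.1, f v) = (a, z)).card with hr
  set l : Fin s → Fin s → ℕ := fun b z =>
    (Finset.univ.filter fun v : Fin s × Fin s => (v.2, f v) = (b, z)).card with hl
  have hrpos : ∀ u : Fin s × Fin s, 0 < r u.1 (f u) := fun u =>
    Finset.card_pos.2 ⟨u, by simp⟩
  have hlpos : ∀ u : Fin s × Fin s, 0 < l u.2 (f u) := fun u =>
    Finset.card_pos.2 ⟨u, by simp⟩
  have hone : ∀ u : Fin s × Fin s, (Finset.univ.filter fun v : Fin s × Fin s =>
      (v.1, v.2, f v) = (u.1, u.2, f u)).card = 1 := by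
    intro u
    rw [Finset.card_eq_one]
    refine ⟨u, ?_⟩
    ext v
    simp only [Finset.mem_filter, Finset.mem_univ, true_and, Prod.mk.injEq,
      Finset.mem_singleton]
    constructor
    · rintro ⟨h, h', -⟩
      exact Prod.ext h h'
    · rintro rfl
      simp
  have hff : ∀ u : Fin s × Fin s, (Finset.univ.filter fun v : Fin s × Fin s =>
      f v = f u).card = s := fun u => hflat _
  -- rewrite
  have hterm : ∑ u : Fin s × Fin s,
      Real.log (((r u.1 (f u) : ℝ) * l u.2 (f u)) / s) = 0 := by
    have hc : (0:ℝ) < 1 / (s ^ 2 : ℝ) := by positivity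
    have hlog : 0 < Real.log s := Real.log_pos hs1
    have e : ∑ u : Fin s × Fin s, (1 / (s ^ 2 : ℝ)) * (Real.log (((r u.1 (f u) : ℝ) * l u.2 (f u)) / s)
        / Real.log s) = 0 := by
      rw [← neg_eq_zero, ← hI]
      simp only [← Finset.sum_neg_distrib, ← Finset.sum_add_distrib, ← Finset.sum_sub_distrib]
      refine Finset.sum_congr rfl fun u _ => ?_
      rw [hone, hff]
      have hr0 : ((r u.1 (f u) : ℕ) : ℝ) ≠ 0 := by exact_mod_cast (hrpos u).ne'
      have hl0 : ((l u.2 (f u) : ℕ) : ℝ) ≠ 0 := by exact_mod_cast (hlpos u).ne'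
      have hs2 : (s : ℝ) ^ 2 ≠ 0 := by positivity
      change _ = -((1 / (s ^ 2 : ℝ)) * Real.logb s ((r u.1 (f u) : ℝ) / s ^ 2)) +
        -((1 / (s ^ 2 : ℝ)) * Real.logb s ((l u.2 (f u) : ℝ) / s ^ 2)) - _ - _
      simp only [Real.logb]
      rw [Real.log_div (mul_ne_zero hr0 hl0) hs0.ne', Real.log_mul hr0 hl0,
        Real.log_div hr0 hs2, Real.log_div hl0 hs2, Real.log_div (by simp) hs2,
        Real.log_div hs0.ne' hs2, Real.log_pow]
      simp
      ring
    rw [← Finset.mul_sum, ← Finset.sum_div] at e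
    rcases mul_eq_zero.1 e with e | e
    · exact absurd e hc.ne'
    · rcases div_eq_zero_iff.1 e with e | e
      · exact e
      · exact absurd e hlog.ne'
  have hge : (s : ℝ) ^ 3 ≤ ∑ u : Fin s × Fin s, (r u.1 (f u) : ℝ) * l u.2 (f u) := by
    have : (0:ℝ) ≤ ∑ u : Fin s × Fin s, (((r u.1 (f u) : ℝ) * l u.2 (f u)) / s - 1) := by
      rw [← hterm]
      refine Finset.sum_le_sum fun u _ => ?_
      have hr0 : (0:ℝ) < ((r u.1 (f u) : ℕ) : ℝ) := by exact_mod_cast (hrpos u)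
      have hl0 : (0:ℝ) < ((l u.2 (f u) : ℕ) : ℝ) := by exact_mod_cast (hlpos u)
      exact Real.log_le_sub_one_of_pos (by positivity)
    rw [Finset.sum_sub_distrib, ← Finset.sum_div] at this
    simp only [Finset.sum_const, Finset.card_univ, Fintype.card_prod, Fintype.card_fin,
      nsmul_eq_mul, mul_one, Nat.cast_mul] at this
    have h3 := sub_nonneg.1 this
    rw [le_div_iff₀ hs0] at h3
    calc (s:ℝ)^3 = s * s * s := by ring
      _ ≤ _ := h3
  have hge' : s ^ 3 ≤ ∑ u : Fin s × Fin s, r u.1 (f u) * l u.2 (f u) := by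
    exact_mod_cast hge
  have hrs : ∀ z, ∑ a, r a z = s := by
    intro z
    refine Eq.trans ?_ (hflat z)
    rw [Finset.card_eq_sum_card_fiberwise (f := Prod.fst) (t := Finset.univ)
      (fun _ _ => Finset.mem_coe.2 (Finset.mem_univ _))]
    refine Finset.sum_congr rfl fun a _ => ?_
    simp only [hr, Finset.filter_filter, Prod.mk.injEq, and_comm]
  have hls : ∀ z, ∑ b, l b z = s := by
    intro z
    refine Eq.trans ?_ (hflat z)
    rw [Finset.card_eq_sum_card_fiberwise (f := Prod.snd) (t := Finset.univ)
      (fun _ _ => Finset.mem_coe.2 (Finset.mem_univ _))]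
    refine Finset.sum_congr rfl fun a _ => ?_
    simp only [hl, Finset.filter_filter, Prod.mk.injEq, and_comm]
  by_contra hne
  have hlt : ∑ z, ∑ u ∈ Finset.univ.filter (fun u : Fin s × Fin s => f u = z), r u.1 z * l u.2 z <
      ∑ z, ∑ u : Fin s × Fin s, r u.1 z * l u.2 z := by
    refine Finset.sum_lt_sum (fun z _ => Finset.sum_le_sum_of_subset (Finset.filter_subset _ _))
      ⟨z, Finset.mem_univ _, ?_⟩
    refine Finset.sum_lt_sum_of_subset (i := (a, b)) (Finset.filter_subset _ _)
      (Finset.mem_univ _) (by simpa using hne) ?_ (fun _ _ _ => Nat.zero_le _)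
    have p1 := hrpos (a, b')
    have p2 := hlpos (a', b)
    rw [h1] at p1
    rw [h2] at p2
    exact Nat.mul_pos p1 p2
  have e1 : ∑ z, ∑ u : Fin s × Fin s, r u.1 z * l u.2 z = s ^ 3 := by
    have : ∀ z, ∑ u : Fin s × Fin s, r u.1 z * l u.2 z = s * s := by
      intro z
      rw [Fintype.sum_prod_type]
      simp only []
      rw [← Finset.sum_mul_sum, hrs, hls]
    simp only [this]
    simp
    ring
  have e2 : ∑ z, ∑ u ∈ Finset.univ.filter (fun u : Fin s × Fin s => f u = z), r u.1 z * l u.2 z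
      = ∑ u : Fin s × Fin s, r u.1 (f u) * l u.2 (f u) := by
    rw [← Finset.sum_fiberwise Finset.univ f (fun u => r u.1 (f u) * l u.2 (f u))]
    refine Finset.sum_congr rfl fun z _ => Finset.sum_congr rfl fun u hu => ?_
    rw [(Finset.mem_filter.1 hu).2]
  omega

lemma flat_card (s : ℕ) (g : Fin s × Fin s → Fin s) (hg : IsFlat s g)
    (hrect : ∀ a b a' b' z, g (a, b') = z → g (a', b) = z → g (a, b) = z) (z : Fin s) :
    (Lset s g z).card * (Rset s g z).card = s := by
  rw [← Finset.card_product]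
  conv_rhs => rw [← hg z]
  congr 1
  ext ⟨a, b⟩
  simp only [Lset, Rset, Finset.mem_product, Finset.mem_filter, Finset.mem_univ, true_and]
  constructor
  · rintro ⟨⟨b', h⟩, ⟨a', h'⟩⟩
    exact hrect _ _ _ _ _ h h'
  · intro h
    exact ⟨⟨b, h⟩, ⟨a, h⟩⟩

lemma count_aux {Ω : Type} (s : ℕ) (ε : ℝ) (F : Finset Ω) (A B : Ω → Fin s) (y : Fin s)
    (p : Ω → Prop) [DecidablePred p] (q : Fin s → Prop) [DecidablePred q]
    (hpq : ∀ c ∈ F, p c ↔ (q (A c) ∧ B c = y))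
    (hu : ∀ x, |((F.filter fun c => A c = x ∧ B c = y).card : ℝ) / (F.card : ℝ)
      - 1 / (s ^ 2 : ℝ)| ≤ ε) :
    |((F.filter p).card : ℝ) / F.card -
      ((Finset.univ.filter q).card : ℝ) / (s ^ 2 : ℝ)| ≤ (Finset.univ.filter q).card * ε := by
  have h1 : (F.filter p).card = ∑ x ∈ Finset.univ.filter q,
      (F.filter fun c => A c = x ∧ B c = y).card := by
    rw [Finset.card_eq_sum_card_fiberwise (f := A) (t := Finset.univ.filter q)]
    · refine Finset.sum_congr rfl fun x hx => ?_
      congr 1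
      ext c
      simp only [Finset.mem_filter, Finset.mem_univ, true_and] at hx ⊢
      constructor
      · rintro ⟨⟨hc, hp⟩, h⟩
        exact ⟨hc, h, ((hpq c hc).1 hp).2⟩
      · rintro ⟨hc, h, h'⟩
        exact ⟨⟨hc, (hpq c hc).2 ⟨h ▸ hx, h'⟩⟩, h⟩
    · intro c hc
      have hc := Finset.mem_filter.1 (Finset.mem_coe.1 hc)
      simpa using ((hpq c hc.1).1 hc.2).1
  have h2 : ((F.filter p).card : ℝ) / F.card -
      ((Finset.univ.filter q).card : ℝ) / (s ^ 2 : ℝ) = ∑ x ∈ Finset.univ.filter q,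
      (((F.filter fun c => A c = x ∧ B c = y).card : ℝ) / (F.card : ℝ) - 1 / (s ^ 2 : ℝ)) := by
    rw [h1, Finset.sum_sub_distrib, ← Finset.sum_div]
    simp [div_eq_mul_inv]
  rw [h2]
  refine (Finset.abs_sum_le_sum_abs _ _).trans ?_
  refine (Finset.sum_le_sum fun x _ => hu x).trans ?_
  simp

lemma key_aux {Ω : Type} (s : ℕ) (hs : 2 ≤ s) (ε : ℝ)
    (hε' : ε ≤ 1 / ((s : ℝ) ^ 2 * (2 * s + 1))) (F : Finset Ω) (A B C D : Ω → Fin s)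
    (f g : Fin s × Fin s → Fin s)
    (hB : ∀ c ∈ F, B c = f (A c, C c)) (hC : ∀ c ∈ F, C c = g (B c, D c))
    (hu1 : ∀ x y, |((F.filter fun c => A c = x ∧ C c = y).card : ℝ) / (F.card : ℝ)
      - 1 / (s ^ 2 : ℝ)| ≤ ε)
    (hu2 : ∀ x y, |((F.filter fun c => D c = x ∧ B c = y).card : ℝ) / (F.card : ℝ)
      - 1 / (s ^ 2 : ℝ)| ≤ ε)
    (hf : ∀ a b a' b' z, f (a, b') = z → f (a', b) = z → f (a, b) = z)
    (hg : ∀ a b a' b' z, g (a, b') = z → g (a', b) = z → g (a, b) = z)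
    (a b z : Fin s) (hz : g (a, b) = z) : (Rset s g z).card = (Lset s f a).card := by
  have k1 := count_aux s ε F A C z (fun c => B c = a ∧ C c = z) (fun w => f (w, z) = a)
    (by
      intro c hc
      constructor
      · rintro ⟨h, h'⟩
        exact ⟨by rw [← h, hB c hc, h'], h'⟩
      · rintro ⟨h, h'⟩
        exact ⟨by rw [hB c hc, h', h], h'⟩) (fun x => hu1 x z)
  have k2 := count_aux s ε F D B a (fun c => B c = a ∧ C c = z) (fun w => g (a, w) = z)
    (by
      intro c hc
      constructor
      · rintro ⟨h, h'⟩
        exact ⟨by rw [← h', hC c hc, h], h⟩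
      · rintro ⟨h, h'⟩
        exact ⟨h', by rw [hC c hc, h', h]⟩) (fun x => hu2 x a)
  have hR : Rset s g z = Finset.univ.filter fun w => g (a, w) = z := by
    ext w
    simp only [Rset, Finset.mem_filter, Finset.mem_univ, true_and]
    exact ⟨fun ⟨x, hx⟩ => hg _ _ _ _ _ hz hx, fun h => ⟨a, h⟩⟩
  set k := (Finset.univ.filter fun w => f (w, z) = a).card with hk
  set m := (Finset.univ.filter fun w => g (a, w) = z).card with hm
  have hks : (k : ℝ) ≤ s := by
    exact_mod_cast (Finset.card_le_univ _).trans (by simp)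
  have hms : (m : ℝ) ≤ s := by
    exact_mod_cast (Finset.card_le_univ _).trans (by simp)
  have hs0 : (0 : ℝ) < s := by exact_mod_cast (by omega : 0 < s)
  have hε0 : 0 ≤ ε := (abs_nonneg _).trans (hu1 a a)
  have hkm : k = m := by
    have h1 : |(k : ℝ) / (s ^ 2 : ℝ) - m / (s ^ 2 : ℝ)| ≤ 2 * s * ε := by
      rw [abs_le] at k1 k2 ⊢
      have := mul_le_mul_of_nonneg_right hks hε0
      have := mul_le_mul_of_nonneg_right hms hε0
      constructor <;> linarith [k1.1, k1.2, k2.1, k2.2]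
    have h2 : 2 * s * ε < 1 / (s ^ 2 : ℝ) := by
      calc 2 * s * ε ≤ 2 * s * (1 / ((s : ℝ) ^ 2 * (2 * s + 1))) := by gcongr
        _ = (2 * s / (2 * s + 1)) * (1 / (s ^ 2 : ℝ)) := by field_simp
        _ < 1 * (1 / (s ^ 2 : ℝ)) := by
          refine mul_lt_mul_of_pos_right ?_ (by positivity)
          rw [div_lt_one (by positivity)]
          linarith
        _ = _ := one_mul _
    have h3 := h1.trans_lt h2
    rw [← sub_div, abs_div, abs_of_pos (by positivity : (0:ℝ) < s ^ 2),
      div_lt_div_iff_of_pos_right (by positivity)] at h3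
    have h4 : |(k : ℤ) - m| < 1 := by exact_mod_cast h3
    rw [Int.abs_lt_one_iff] at h4
    omega
  have hmpos : 0 < m := Finset.card_pos.2 ⟨b, by simpa using hz⟩
  obtain ⟨w, hw⟩ := Finset.card_pos.1 (hkm ▸ hmpos : 0 < k)
  have hw : f (w, z) = a := by simpa using hw
  have hL : Lset s f a = Finset.univ.filter fun w => f (w, z) = a := by
    ext x
    simp only [Lset, Finset.mem_filter, Finset.mem_univ, true_and]
    exact ⟨fun ⟨y, hy⟩ => hf _ _ _ _ _ hy hw, fun h => ⟨z, h⟩⟩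
  rw [hR, hL, ← hm, ← hk, hkm]

/-- Let `s ≥ 2`, `n ≥ 5` and `0 < ε ≤ 1/(s²(2s+1))`.  Let `P` be a
non-trivial protocol on `C_n` with `s` colours, `X` uniform on `Fix(P)`, and `j` any
index (modulo `n`).  If `f_{j-1}, f_j, f_{j+1}` are semi-perfect and the pairs
`(X_{j-2}, X_j)`, `(X_{j-1}, X_{j+1})`, `(X_j, X_{j+2})` are `(s², ε)`-uniform,
then `f_j` is a perfect function. -/
theorem cycle_guessing_stmt16 (n s : ℕ) [NeZero n] (hn : 5 ≤ n) (hs : 2 ≤ s)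
    (ε : ℝ) (hε : 0 < ε) (hε' : ε ≤ 1 / ((s : ℝ) ^ 2 * (2 * s + 1)))
    (f : ZMod n → Fin s × Fin s → Fin s)
    (hne : (cycleFix n s f).Nonempty)
    (j : ZMod n)
    (hm : IsSemiPerfect s (f (j - 1))) (hj : IsSemiPerfect s (f j))
    (hp : IsSemiPerfect s (f (j + 1)))
    (hu1 : pairUnif n s (cycleFix n s f) (j - 2) j ε)
    (hu2 : pairUnif n s (cycleFix n s f) (j - 1) (j + 1) ε)
    (hu3 : pairUnif n s (cycleFix n s f) j (j + 2) ε) :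
    IsPerfect s (f j) := by
  have rm := semi_rect s hs _ hm
  have rj := semi_rect s hs _ hj
  have rp := semi_rect s hs _ hp
  have hfix : ∀ c ∈ cycleFix n s f, ∀ i, c i = f i (c (i - 1), c (i + 1)) := by
    intro c hc
    simpa [cycleFix] using hc
  have K1 := key_aux s hs ε hε' (cycleFix n s f) (fun c => c (j - 2)) (fun c => c (j - 1))
    (fun c => c j) (fun c => c (j + 1)) (f (j - 1)) (f j)
    (by
      intro c hc
      have := hfix c hc (j - 1)
      rwa [show j - 1 - 1 = j - 2 by ring, sub_add_cancel] at this)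
    (fun c hc => hfix c hc j)
    (by
      intro x y
      simpa only [Prod.mk.injEq] using hu1 (x, y))
    (by
      intro x y
      have := hu2 (y, x)
      simp only [Prod.mk.injEq] at this
      simpa only [and_comm] using this)
    rm rj
  have K2 := key_aux s hs ε hε' (cycleFix n s f) (fun c => c (j + 2)) (fun c => c (j + 1))
    (fun c => c j) (fun c => c (j - 1)) (fun u => f (j + 1) (u.2, u.1)) (fun u => f j (u.2, u.1))
    (by
      intro c hc
      have := hfix c hc (j + 1)
      rwa [show j + 1 + 1 = j + 2 by ring, add_sub_cancel_right] at this)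
    (fun c hc => hfix c hc j)
    (by
      intro x y
      have := hu3 (y, x)
      simp only [Prod.mk.injEq] at this
      simpa only [and_comm] using this)
    (by
      intro x y
      simpa only [Prod.mk.injEq] using hu2 (x, y))
    (fun a b a' b' z h h' => rp b a b' a' z h' h)
    (fun a b a' b' z h h' => rj b a b' a' z h' h)
  have hcard := flat_card s (f j) hj.1 rj
  have hLR : ∀ z, Rset s (fun u => f j (u.2, u.1)) z = Lset s (f j) z := fun z => rfl
  have hspos : 0 < s := by omega
  have hex : ∀ z, ∃ a b, f j (a, b) = z := by
    intro z
    have : 0 < (Finset.univ.filter fun u => f j u = z).card := by rw [hj.1 z]; exact hspos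
    obtain ⟨⟨a, b⟩, h⟩ := Finset.card_pos.1 this
    exact ⟨a, b, by simpa using h⟩
  refine ⟨hj, fun z z' => ?_⟩
  obtain ⟨a, b, hz⟩ := hex z
  obtain ⟨a', b', hz'⟩ := hex z'
  have e1 : (Rset s (f j) z).card = (Rset s (f j) (f j (a, b'))).card := by
    rw [K1 a b z hz, K1 a b' _ rfl]
  have e2 : (Lset s (f j) z').card = (Lset s (f j) (f j (a, b'))).card := by
    rw [← hLR, ← hLR, K2 b' a' z' hz', K2 b' a _ rfl]
  have c1 := hcard z
  have c2 := hcard z'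
  have c3 := hcard (f j (a, b'))
  rw [← e1, ← e2] at c3
  have hRpos : 0 < (Rset s (f j) z).card := by
    rcases Nat.eq_zero_or_pos (Rset s (f j) z).card with h | h
    · rw [h] at c1; omega
    · exact h
  have hLpos : 0 < (Lset s (f j) z').card := by
    rcases Nat.eq_zero_or_pos (Lset s (f j) z').card with h | h
    · rw [h] at c2; omega
    · exact h
  exact ⟨Nat.eq_of_mul_eq_mul_right hRpos (c1.trans c3.symm),
    Nat.eq_of_mul_eq_mul_left hLpos (c3.trans c2.symm)⟩
end

section
/- Let n ≥ 3 be an odd integer, let s ≥ 2 be an integer and let a be the greatest divisor of s with a ≤ √s. If P = (f_1,…,f_n) is a non-trivial protocol on C_n with s colours such that f_j is a perfect function for some index j, then fix(P) ≤ a · s^{(n−1)/2}. -/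
open Finset

lemma pEnt_unif (s : ℕ) {α β : Type} [Fintype α] [DecidableEq β] [Fintype β]
    (q : α → ℝ) (g : α → β) :
    pEnt s q g = -∑ u : α, q u *
      Real.logb s (∑ x ∈ Finset.univ.filter fun x => g x = g u, q x) := by
  unfold pEnt
  congr 1
  rw [← Finset.sum_fiberwise (s := Finset.univ) (g := g)]
  refine Finset.sum_congr rfl fun y _ => ?_
  rw [Finset.sum_mul]
  refine Finset.sum_congr rfl fun x hx => ?_
  rw [(Finset.mem_filter.1 hx).2]

def rowc (s : ℕ) (f : Fin s × Fin s → Fin s) (z x : Fin s) : ℕ :=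
  (Finset.univ.filter fun y => f (x, y) = z).card

def colc (s : ℕ) (f : Fin s × Fin s → Fin s) (z y : Fin s) : ℕ :=
  (Finset.univ.filter fun x => f (x, y) = z).card

lemma rowc_sum (s : ℕ) (f : Fin s × Fin s → Fin s) (hf : IsFlat s f) (z : Fin s) :
    ∑ x, rowc s f z x = s := by
  have h := hf z
  rw [Finset.card_filter, Fintype.sum_prod_type] at h
  refine Eq.trans ?_ h
  simp only [rowc, Finset.card_filter]

lemma colc_sum (s : ℕ) (f : Fin s × Fin s → Fin s) (hf : IsFlat s f) (z : Fin s) :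
    ∑ y, colc s f z y = s := by
  have h := hf z
  rw [Finset.card_filter, Fintype.sum_prod_type_right] at h
  refine Eq.trans ?_ h
  simp only [colc, Finset.card_filter]

lemma row_eq (s : ℕ) (f : Fin s × Fin s → Fin s) (u : Fin s × Fin s) :
    (Finset.univ.filter fun v : Fin s × Fin s => (v.1, f v) = (u.1, f u)).card
      = rowc s f (f u) u.1 := by
  unfold rowc
  symm
  refine Finset.card_bij (fun y _ => (u.1, y)) ?_ ?_ ?_
  · intro y hy; simpa using hy
  · intro y _ y' _ h; simpa using h
  · rintro ⟨x, y⟩ h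
    simp only [Finset.mem_filter, Finset.mem_univ, true_and, Prod.mk.injEq] at h
    obtain ⟨h1, h2⟩ := h
    subst h1
    exact ⟨y, by simpa using h2, rfl⟩

lemma col_eq (s : ℕ) (f : Fin s × Fin s → Fin s) (u : Fin s × Fin s) :
    (Finset.univ.filter fun v : Fin s × Fin s => (v.2, f v) = (u.2, f u)).card
      = colc s f (f u) u.2 := by
  unfold colc
  symm
  refine Finset.card_bij (fun x _ => (x, u.2)) ?_ ?_ ?_
  · intro y hy; simpa using hy
  · intro y _ y' _ h; simpa using h
  · rintro ⟨x, y⟩ h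
    simp only [Finset.mem_filter, Finset.mem_univ, true_and, Prod.mk.injEq] at h
    obtain ⟨h1, h2⟩ := h
    subst h1
    exact ⟨x, by simpa using h2, rfl⟩

lemma rowc_pos (s : ℕ) (f : Fin s × Fin s → Fin s) (u : Fin s × Fin s) :
    0 < rowc s f (f u) u.1 :=
  Finset.card_pos.2 ⟨u.2, by simp⟩

lemma colc_pos (s : ℕ) (f : Fin s × Fin s → Fin s) (u : Fin s × Fin s) :
    0 < colc s f (f u) u.2 :=
  Finset.card_pos.2 ⟨u.1, by simp⟩

lemma log_sum (s : ℕ) (hs : 2 ≤ s) (f : Fin s × Fin s → Fin s) (hf : IsSemiPerfect s f) :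
    ∑ u : Fin s × Fin s,
      Real.log ((rowc s f (f u) u.1 : ℝ) * colc s f (f u) u.2 / s) = 0 := by
  obtain ⟨hfl, h⟩ := hf
  have hs0 : (s : ℝ) ≠ 0 := by positivity
  have hl : Real.log s ≠ 0 := (Real.log_pos (by exact_mod_cast hs)).ne'
  unfold condMI at h
  simp only [pEnt_unif, unifPair, Finset.sum_const, nsmul_eq_mul, row_eq, col_eq, hfl _] at h
  have h3 : ∀ u : Fin s × Fin s,
      (Finset.univ.filter fun x : Fin s × Fin s => (x.1, x.2, f x) = (u.1, u.2, f u)).card = 1 := by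
    intro u
    rw [Finset.card_eq_one]
    refine ⟨u, ?_⟩
    ext v
    simp only [Finset.mem_filter, Finset.mem_univ, true_and, Prod.mk.injEq, Finset.mem_singleton]
    constructor
    · rintro ⟨h1, h2, _⟩; exact Prod.ext h1 h2
    · rintro rfl; simp
  simp only [h3] at h
  have key : ∀ u : Fin s × Fin s,
      Real.log ((rowc s f (f u) u.1 : ℝ) * colc s f (f u) u.2 / s) = (s ^ 2 * Real.log s : ℝ) *
      (1 / (s ^ 2 : ℝ) * Real.logb s (rowc s f (f u) u.1 * (1 / (s ^ 2 : ℝ)))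
       + 1 / (s ^ 2 : ℝ) * Real.logb s (colc s f (f u) u.2 * (1 / (s ^ 2 : ℝ)))
       - 1 / (s ^ 2 : ℝ) * Real.logb s ((1 : ℕ) * (1 / (s ^ 2 : ℝ)))
       - 1 / (s ^ 2 : ℝ) * Real.logb s (s * (1 / (s ^ 2 : ℝ)))) := by
    intro u
    have h1 : (rowc s f (f u) u.1 : ℝ) ≠ 0 := by exact_mod_cast (rowc_pos s f u).ne'
    have h2 : (colc s f (f u) u.2 : ℝ) ≠ 0 := by exact_mod_cast (colc_pos s f u).ne'
    have h4 : (1 / (s ^ 2 : ℝ)) ≠ 0 := by positivity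
    simp only [Real.logb]
    rw [Real.log_div (mul_ne_zero h1 h2) hs0, Real.log_mul h1 h2, Real.log_mul h1 h4,
      Real.log_mul h2 h4, Real.log_mul hs0 h4, Nat.cast_one, one_mul]
    field_simp
    ring
  simp only [key]
  rw [← Finset.mul_sum]
  simp only [Finset.sum_sub_distrib, Finset.sum_add_distrib, Finset.sum_const, nsmul_eq_mul]
  simp only [Finset.sum_const, nsmul_eq_mul] at h
  rw [show ∀ A B C D : ℝ, A + B - C - D = -(-A + -B - -C - -D) by intros; ring, h]
  simp

lemma sum_fibre_prod (s : ℕ) (f : Fin s × Fin s → Fin s) (hf : IsFlat s f) :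
    ∑ z, ∑ u : Fin s × Fin s, (rowc s f z u.1 : ℝ) * colc s f z u.2 = s ^ 3 := by
  have : ∀ z, ∑ u : Fin s × Fin s, (rowc s f z u.1 : ℝ) * colc s f z u.2 = s ^ 2 := by
    intro z
    rw [Fintype.sum_prod_type]
    simp only
    rw [← Finset.sum_mul_sum]
    have h1 := rowc_sum s f hf z
    have h2 := colc_sum s f hf z
    rw [← Nat.cast_sum, ← Nat.cast_sum, h1, h2]; ring
  simp only [this]
  simp; ring

lemma rect (s : ℕ) (hs : 2 ≤ s) (f : Fin s × Fin s → Fin s) (hf : IsSemiPerfect s f)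
    (z x y : Fin s) (hx : x ∈ Lset s f z) (hy : y ∈ Rset s f z) : f (x, y) = z := by
  by_contra hne
  have hs0 : (0 : ℝ) < s := by positivity
  have hr : 0 < rowc s f z x := by
    obtain ⟨y', h⟩ := (Finset.mem_filter.1 hx).2
    exact Finset.card_pos.2 ⟨y', by simpa using h⟩
  have hc : 0 < colc s f z y := by
    obtain ⟨y', h⟩ := (Finset.mem_filter.1 hy).2
    exact Finset.card_pos.2 ⟨y', by simpa using h⟩
  have h0 := log_sum s hs f hf
  have hle : ∑ u : Fin s × Fin s,
      Real.log ((rowc s f (f u) u.1 : ℝ) * colc s f (f u) u.2 / s) ≤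
      ∑ u : Fin s × Fin s, ((rowc s f (f u) u.1 : ℝ) * colc s f (f u) u.2 / s - 1) := by
    refine Finset.sum_le_sum fun u _ => ?_
    have h1 : (0 : ℝ) < rowc s f (f u) u.1 := by exact_mod_cast rowc_pos s f u
    have h2 : (0 : ℝ) < colc s f (f u) u.2 := by exact_mod_cast colc_pos s f u
    exact Real.log_le_sub_one_of_pos (by positivity)
  rw [h0, Finset.sum_sub_distrib, ← Finset.sum_div] at hle
  simp only [Finset.sum_const, Finset.card_univ, Fintype.card_prod, Fintype.card_fin,
    nsmul_eq_mul, mul_one, Nat.cast_mul] at hle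
  have hge : (s : ℝ) ^ 3 ≤ ∑ u : Fin s × Fin s, (rowc s f (f u) u.1 : ℝ) * colc s f (f u) u.2 := by
    have : (s : ℝ) * s ≤ (∑ u : Fin s × Fin s, (rowc s f (f u) u.1 : ℝ) * colc s f (f u) u.2) / s := by
      linarith
    rw [le_div_iff₀ hs0] at this
    linarith
  rw [← sum_fibre_prod s f hf.1, Finset.sum_comm] at hge
  have hlt : ∑ u : Fin s × Fin s, (rowc s f (f u) u.1 : ℝ) * colc s f (f u) u.2 <
      ∑ u : Fin s × Fin s, ∑ z, (rowc s f z u.1 : ℝ) * colc s f z u.2 := by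
    refine Finset.sum_lt_sum (fun u _ => ?_) ⟨(x, y), Finset.mem_univ _, ?_⟩
    · exact Finset.single_le_sum (f := fun z => (rowc s f z u.1 : ℝ) * colc s f z u.2)
        (fun _ _ => by positivity) (Finset.mem_univ (f u))
    · refine Finset.single_lt_sum (f := fun z => (rowc s f z x : ℝ) * colc s f z y)
        (i := f (x, y)) (j := z) (fun h => hne h.symm) (Finset.mem_univ _) (Finset.mem_univ _) ?_
        (fun _ _ _ => by positivity)
      have h1 : (0 : ℝ) < rowc s f z x := by exact_mod_cast hr
      have h2 : (0 : ℝ) < colc s f z y := by exact_mod_cast hc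
      positivity
  linarith

lemma card_LR (s : ℕ) (hs : 2 ≤ s) (f : Fin s × Fin s → Fin s) (hf : IsSemiPerfect s f)
    (z : Fin s) : (Lset s f z).card * (Rset s f z).card = s := by
  rw [← Finset.card_product]
  conv_rhs => rw [← hf.1 z]
  congr 1
  ext ⟨x, y⟩
  simp only [Finset.mem_product, Finset.mem_filter, Finset.mem_univ, true_and]
  constructor
  · rintro ⟨h1, h2⟩; exact rect s hs f hf z x y h1 h2
  · intro h
    exact ⟨by simp only [Lset, Finset.mem_filter, Finset.mem_univ, true_and]; exact ⟨y, h⟩,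
      by simp only [Rset, Finset.mem_filter, Finset.mem_univ, true_and]; exact ⟨x, h⟩⟩

lemma determ (m s : ℕ) (hm : 1 ≤ m) (j e : ZMod (2 * m + 1)) (he : e = 1 ∨ e = -1)
    (c c' : ZMod (2 * m + 1) → Fin s)
    (hstep : ∀ i, c (i - e) = c' (i - e) → c (i + e) = c' (i + e) → c i = c' i)
    (h0 : c j = c' j) (h1 : c (j - e) = c' (j - e))
    (h2 : ∀ k : Fin (m - 1), c (j + e * ((2 * (k.1 + 1) : ℕ) : ZMod (2 * m + 1)))
      = c' (j + e * ((2 * (k.1 + 1) : ℕ) : ZMod (2 * m + 1)))) : c = c' := by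
  have hev : ∀ k ≤ m, c (j + e * ((2 * k : ℕ) : ZMod (2 * m + 1)))
      = c' (j + e * ((2 * k : ℕ) : ZMod (2 * m + 1))) := by
    intro k hk
    rcases Nat.eq_zero_or_pos k with rfl | hk0
    · simpa using h0
    rcases hk.eq_or_lt with rfl | hlt
    · have h : ((2 * k : ℕ) : ZMod (2 * k + 1)) = -1 := by
        have := ZMod.natCast_self (2 * k + 1)
        push_cast at this ⊢
        linear_combination this
      rw [h]
      simpa [sub_eq_add_neg] using h1
    · have := h2 ⟨k - 1, by omega⟩
      simpa [Nat.sub_add_cancel hk0] using this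
  have hall : ∀ t < 2 * m + 1, c (j + e * (t : ZMod (2 * m + 1)))
      = c' (j + e * (t : ZMod (2 * m + 1))) := by
    intro t ht
    rcases Nat.even_or_odd' t with ⟨k, rfl | rfl⟩
    · exact hev k (by omega)
    · apply hstep
      · have := hev k (by omega)
        convert this using 2 <;> push_cast <;> ring
      · have := hev (k + 1) (by omega)
        convert this using 2 <;> push_cast <;> ring
  funext i
  have hee : e * e = 1 := by rcases he with rfl | rfl <;> ring
  have := hall (ZMod.val (e * (i - j))) (ZMod.val_lt _)
  rw [ZMod.natCast_zmod_val] at this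
  have h : j + e * (e * (i - j)) = i := by linear_combination (i - j) * hee
  rwa [h] at this

lemma count (m s l : ℕ) (hm : 1 ≤ m) (j e : ZMod (2 * m + 1)) (he : e = 1 ∨ e = -1)
    (F : Finset (ZMod (2 * m + 1) → Fin s)) (L : Fin s → Finset (Fin s))
    (hL : ∀ z, (L z).card = l)
    (hstep : ∀ c ∈ F, ∀ c' ∈ F, ∀ i, c (i - e) = c' (i - e) → c (i + e) = c' (i + e) → c i = c' i)
    (hF : ∀ c ∈ F, c (j - e) ∈ L (c j)) : F.card ≤ l * s ^ m := by
  classical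
  have hT : (((Finset.univ : Finset (Fin s)).sigma L) ×ˢ
      (Finset.univ : Finset (Fin (m - 1) → Fin s))).card = l * s ^ m := by
    rw [Finset.card_product, Finset.card_sigma]
    simp only [hL]
    simp only [Finset.sum_const, Finset.card_univ, Fintype.card_fin, Fintype.card_pi,
      Finset.prod_const, smul_eq_mul]
    obtain ⟨k, rfl⟩ : ∃ k, m = k + 1 := ⟨m - 1, by omega⟩
    simp only [Nat.add_sub_cancel]
    ring
  rw [← hT]
  refine Finset.card_le_card_of_injOn
    (fun c => (⟨c j, c (j - e)⟩, fun k => c (j + e * ((2 * (k.1 + 1) : ℕ) : ZMod (2 * m + 1)))))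
    ?_ ?_
  · intro c hc
    simp only [Finset.coe_product, Set.mem_prod, Finset.mem_coe, Finset.mem_sigma,
      Finset.mem_univ, true_and, and_true]
    exact hF c hc
  · intro c hc c' hc' h
    simp only [Prod.mk.injEq, Sigma.mk.injEq, heq_eq_eq] at h
    obtain ⟨⟨h0, h1⟩, h2⟩ := h
    exact determ m s hm j e he c c' (hstep c hc c' hc') h0 h1 (fun k => congrFun h2 k)

/-- Let `n ≥ 3` be odd, `s ≥ 2`, and let `a` be the greatest
divisor of `s` with `a ≤ √s`.  If `P = (f_i)` is a non-trivial protocol on `C_n`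
with `s` colours such that `f_j` is a perfect function for some index `j`, then
`fix(P) ≤ a · s^{(n-1)/2}`. -/
theorem cycle_guessing_stmt17 (n s a : ℕ) [NeZero n] (hn : 3 ≤ n) (hodd : Odd n)
    (hs : 2 ≤ s)
    (ha : a ∣ s ∧ a * a ≤ s ∧ ∀ d : ℕ, d ∣ s → d * d ≤ s → d ≤ a)
    (f : ZMod n → Fin s × Fin s → Fin s)
    (hne : (cycleFix n s f).Nonempty)
    (j : ZMod n) (hperf : IsPerfect s (f j)) :
    (cycleFix n s f).card ≤ a * s ^ ((n - 1) / 2) := by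
  obtain ⟨m, rfl⟩ := hodd
  have hm : 1 ≤ m := by omega
  rw [show (2 * m + 1 - 1) / 2 = m by omega]
  obtain ⟨c0, hc0⟩ := hne
  have hLR := card_LR s hs (f j) hperf.1 (c0 j)
  have hmem : ∀ c ∈ cycleFix (2 * m + 1) s f, ∀ i, c i = f i (c (i - 1), c (i + 1)) :=
    fun c hc => (Finset.mem_filter.1 hc).2
  set l := (Lset s (f j) (c0 j)).card with hl
  set r := (Rset s (f j) (c0 j)).card with hr
  rcases le_total l r with h | h
  · have hla : l ≤ a := ha.2.2 l ⟨r, hLR.symm⟩ (by nlinarith)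
    refine (count m s l hm j 1 (Or.inl rfl) _ (Lset s (f j)) (fun z => (hperf.2 z _).1)
      ?_ ?_).trans (Nat.mul_le_mul_right _ hla)
    · intro c hc c' hc' i h1 h2
      rw [hmem c hc i, hmem c' hc' i, h1, h2]
    · intro c hc
      simp only [Lset, Finset.mem_filter, Finset.mem_univ, true_and]
      exact ⟨c (j + 1), (hmem c hc j).symm⟩
  · have hra : r ≤ a := ha.2.2 r ⟨l, by rw [mul_comm]; exact hLR.symm⟩ (by nlinarith)
    refine (count m s r hm j (-1) (Or.inr rfl) _ (Rset s (f j)) (fun z => (hperf.2 z _).2)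
      ?_ ?_).trans (Nat.mul_le_mul_right _ hra)
    · intro c hc c' hc' i h1 h2
      rw [sub_neg_eq_add] at h1
      rw [← sub_eq_add_neg] at h2
      rw [hmem c hc i, hmem c' hc' i, h1, h2]
    · intro c hc
      rw [sub_neg_eq_add]
      simp only [Rset, Finset.mem_filter, Finset.mem_univ, true_and]
      exact ⟨c (j - 1), (hmem c hc j).symm⟩
end

section
/- For every integer s ≥ 2, let a be the greatest divisor of s with a ≤ √s. Then for every even integer n ≥ 4, the maximum of fix(P) over all protocols P on C_n with s colours equals s^{n/2} (i.e. gn(C_n, s) = n/2); and there exists a natural number N such that for every odd integer n > N, the maximum of fix(P) over all protocols P on C_n with s colours equals a · s^{(n−1)/2} (i.e. gn(C_n, s) = (n−1)/2 + log_s a), and this maximum is attained by the fractional-clique-partition protocol P_fcp. -/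
open Finset

/-- First coordinate `φ(z)` of a colour under the bijection `π : Z_a × Z_b ≃ Z_s`. -/
def fcpPhi {a b s : ℕ} (π : ZMod a × ZMod b ≃ Fin s) (z : Fin s) : ZMod a :=
  (π.symm z).1

/-- Second coordinate `ψ(z)` of a colour under the bijection `π : Z_a × Z_b ≃ Z_s`. -/
def fcpPsi {a b s : ℕ} (π : ZMod a × ZMod b ≃ Fin s) (z : Fin s) : ZMod b :=
  (π.symm z).2

/-- The fractional-clique-partition protocol `P_fcp` on `C_n` (`n` odd), for a
factorisation `s = a·b` with `a ≤ b` and a bijection `π : Z_a × Z_b ≃ Z_s`.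
Vertices are the residues modulo `n`, vertex `i` of the paper corresponding to the
residue of `i` (so vertex `n` is the residue `0`).  The first argument of `f i` is
the colour of vertex `i - 1` and the second the colour of vertex `i + 1`:
* `f 1 (c_n, c_2)   = π(φ(c_2), φ(c_n))` (regarding `Z_a ⊆ Z_b` via `val`),
* `f n (c_{n-1}, c_1) = π(ψ(c_1) mod a, ψ(c_{n-1}))`,
* `f i (c_{i-1}, c_{i+1}) = π(φ(c_{i-1}), ψ(c_{i+1}))` for even `i`, `2 ≤ i ≤ n-1`,
* `f i (c_{i-1}, c_{i+1}) = π(φ(c_{i+1}), ψ(c_{i-1}))` for odd `i`, `3 ≤ i ≤ n-2`. -/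
def fcpProtocol (n s a b : ℕ) [NeZero n] (π : ZMod a × ZMod b ≃ Fin s) :
    ZMod n → Fin s × Fin s → Fin s := fun i p =>
  if i.val = 1 then π (fcpPhi π p.2, (((fcpPhi π p.1).val : ℕ) : ZMod b))
  else if i.val = 0 then π ((((fcpPsi π p.2).val : ℕ) : ZMod a), fcpPsi π p.1)
  else if i.val % 2 = 0 then π (fcpPhi π p.1, fcpPsi π p.2)
  else π (fcpPhi π p.2, fcpPsi π p.1)

theorem cg_card_image_le {α β γ : Type} [DecidableEq β] [DecidableEq γ] (F : Finset α) (g : α → β) (h : α → γ)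
    (H : ∀ c ∈ F, ∀ c' ∈ F, g c = g c' → h c = h c') :
    (F.image h).card ≤ (F.image g).card := by
  rcases F.eq_empty_or_nonempty with rfl | ⟨c0, _⟩
  · simp
  haveI : Nonempty α := ⟨c0⟩
  have h1 : ∀ y ∈ F.image h, ∃ c ∈ F, h c = y := by
    intro y hy; simpa using hy
  choose! r hr1 hr2 using h1
  apply Finset.card_le_card_of_injOn (fun y => g (r y))
  · intro y hy
    exact Finset.mem_coe.2 (Finset.mem_image_of_mem _ (hr1 y hy))
  · intro y hy y' hy' e
    rw [← hr2 y hy, ← hr2 y' hy']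
    exact H _ (hr1 y hy) _ (hr1 y' hy') e

/-- prefix of length `k` starting at `i` -/
def cgPre {n s : ℕ} (i : ZMod n) (k : ℕ) (c : ZMod n → Fin s) : ℕ → Option (Fin s) :=
  fun t => if t < k then some (c (i + (t : ZMod n))) else none

theorem cgPre_eq_iff {n s : ℕ} (i : ZMod n) (k : ℕ) (c c' : ZMod n → Fin s) :
    cgPre i k c = cgPre i k c' ↔ ∀ t < k, c (i + (t : ZMod n)) = c' (i + (t : ZMod n)) := by
  constructor
  · intro h t ht
    have := congrFun h t
    simpa [cgPre, ht] using this
  · intro h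
    funext t
    by_cases ht : t < k
    · simp [cgPre, ht, h t ht]
    · simp [cgPre, ht]

open Classical in
noncomputable def cgPC {n s : ℕ} (F : Finset (ZMod n → Fin s)) (i : ZMod n) (k : ℕ) : ℕ :=
  (F.image (cgPre i k)).card

open Classical in
noncomputable def cgD {n s : ℕ} (F : Finset (ZMod n → Fin s)) (i : ZMod n) (k : ℕ) :
    Finset (ℕ → Option (Fin s)) :=
  (F.image (cgPre i k)).filter fun w =>
    ∃ y, ∀ c ∈ F, cgPre i k c = w → c (i + ((k + 1 : ℕ) : ZMod n)) ≠ y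

open Classical in
theorem cgD_mem {n s : ℕ} (F : Finset (ZMod n → Fin s)) (i : ZMod n) (k : ℕ)
    (w : ℕ → Option (Fin s)) : w ∈ cgD F i k ↔ w ∈ F.image (cgPre i k) ∧
    ∃ y, ∀ c ∈ F, cgPre i k c = w → c (i + ((k + 1 : ℕ) : ZMod n)) ≠ y := by
  unfold cgD
  rw [Finset.mem_filter]

theorem cg_fix {n s : ℕ} [NeZero n] {f : ZMod n → Fin s × Fin s → Fin s}
    {c : ZMod n → Fin s} (hc : c ∈ cycleFix n s f) (i : ZMod n) (k : ℕ) :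
    c (i + ((k + 1 : ℕ) : ZMod n)) = f (i + ((k + 1 : ℕ) : ZMod n))
      (c (i + (k : ZMod n)), c (i + ((k + 2 : ℕ) : ZMod n))) := by
  have h := (Finset.mem_filter.1 hc).2 (i + ((k + 1 : ℕ) : ZMod n))
  have e1 : i + ((k + 1 : ℕ) : ZMod n) - 1 = i + (k : ZMod n) := by push_cast; ring
  have e2 : i + ((k + 1 : ℕ) : ZMod n) + 1 = i + ((k + 2 : ℕ) : ZMod n) := by push_cast; ring
  rw [e1, e2] at h
  exact h

open Classical in
theorem cg_step {n s : ℕ} [NeZero n] (f : ZMod n → Fin s × Fin s → Fin s) (i : ZMod n) (k : ℕ) :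
    cgPC (cycleFix n s f) i (k + 3) + (cgD (cycleFix n s f) i (k + 1)).card
      ≤ s * cgPC (cycleFix n s f) i (k + 1) := by
  set F := cycleFix n s f with hF
  let g : (ZMod n → Fin s) → (ℕ → Option (Fin s)) × Fin s :=
    fun c => (cgPre i (k + 1) c, c (i + ((k + 1 + 1 : ℕ) : ZMod n)))
  have h1 : cgPC F i (k + 3) ≤ (F.image g).card := by
    apply cg_card_image_le
    intro c hc c' hc' e
    have e1 := (cgPre_eq_iff _ _ _ _).1 (congrArg Prod.fst e)
    have e2 : c (i + ((k + 2 : ℕ) : ZMod n)) = c' (i + ((k + 2 : ℕ) : ZMod n)) := congrArg Prod.snd e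
    rw [cgPre_eq_iff]
    intro t ht
    rcases Nat.lt_or_ge t (k + 1) with h | h
    · exact e1 t h
    · obtain rfl | rfl : t = k + 1 ∨ t = k + 2 := by omega
      · rw [cg_fix hc, cg_fix hc', e1 k (by omega), e2]
      · exact e2
  have h2 : ∀ w ∈ cgD F i (k + 1), ∃ y, ∀ c ∈ F, cgPre i (k + 1) c = w →
      c (i + ((k + 1 + 1 : ℕ) : ZMod n)) ≠ y := fun w hw => ((cgD_mem _ _ _ _).1 hw).2
  by_cases hne : (cgD F i (k + 1)).Nonempty
  swap
  · rw [Finset.not_nonempty_iff_eq_empty.1 hne, Finset.card_empty, add_zero]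
    refine h1.trans ?_
    have : F.image g ⊆ (F.image (cgPre i (k + 1))) ×ˢ (Finset.univ : Finset (Fin s)) := by
      intro x hx
      obtain ⟨c, hc, rfl⟩ := Finset.mem_image.1 hx
      exact Finset.mem_product.2 ⟨Finset.mem_image_of_mem _ hc, Finset.mem_univ _⟩
    have := Finset.card_le_card this
    rw [Finset.card_product, Finset.card_univ, Fintype.card_fin, mul_comm] at this
    exact this
  obtain ⟨w0, hw0⟩ := hne
  obtain ⟨y0, _⟩ := h2 w0 hw0
  haveI : Nonempty (Fin s) := ⟨y0⟩
  choose! r hr using h2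
  have h3 : ((cgD F i (k + 1)).image fun w => (w, r w)).card = (cgD F i (k + 1)).card := by
    apply Finset.card_image_of_injective
    intro a b hab
    exact congrArg Prod.fst hab
  have hd : Disjoint (F.image g) ((cgD F i (k + 1)).image fun w => (w, r w)) := by
    rw [Finset.disjoint_left]
    intro x hx hx'
    obtain ⟨c, hc, rfl⟩ := Finset.mem_image.1 hx
    obtain ⟨w, hw, e⟩ := Finset.mem_image.1 hx'
    have e1 : w = cgPre i (k + 1) c := congrArg Prod.fst e
    have e2 : r w = c (i + ((k + 1 + 1 : ℕ) : ZMod n)) := congrArg Prod.snd e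
    exact hr w hw c hc e1.symm e2.symm
  have : F.image g ∪ ((cgD F i (k + 1)).image fun w => (w, r w)) ⊆
      (F.image (cgPre i (k + 1))) ×ˢ (Finset.univ : Finset (Fin s)) := by
    intro x hx
    rcases Finset.mem_union.1 hx with hx | hx
    · obtain ⟨c, hc, rfl⟩ := Finset.mem_image.1 hx
      exact Finset.mem_product.2 ⟨Finset.mem_image_of_mem _ hc, Finset.mem_univ _⟩
    · obtain ⟨w, hw, rfl⟩ := Finset.mem_image.1 hx
      exact Finset.mem_product.2 ⟨((cgD_mem _ _ _ _).1 hw).1, Finset.mem_univ _⟩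
  have := Finset.card_le_card this
  rw [Finset.card_union_of_disjoint hd, h3, Finset.card_product, Finset.card_univ,
    Fintype.card_fin, mul_comm] at this
  exact le_trans (Nat.add_le_add_right h1 _) this

open Classical in
theorem cg_succ {n s : ℕ} (F : Finset (ZMod n → Fin s)) (i : ZMod n) (k : ℕ) :
    cgPC F i (k + 1) ≤ s * cgPC F i k := by
  let g : (ZMod n → Fin s) → (ℕ → Option (Fin s)) × Fin s :=
    fun c => (cgPre i k c, c (i + ((k : ℕ) : ZMod n)))
  have h1 : cgPC F i (k + 1) ≤ (F.image g).card := by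
    apply cg_card_image_le
    intro c hc c' hc' e
    have e1 := (cgPre_eq_iff _ _ _ _).1 (congrArg Prod.fst e)
    have e2 : c (i + ((k : ℕ) : ZMod n)) = c' (i + ((k : ℕ) : ZMod n)) := congrArg Prod.snd e
    rw [cgPre_eq_iff]
    intro t ht
    rcases Nat.lt_or_ge t k with h | h
    · exact e1 t h
    · obtain rfl : t = k := by omega
      exact e2
  refine h1.trans ?_
  have : F.image g ⊆ (F.image (cgPre i k)) ×ˢ (Finset.univ : Finset (Fin s)) := by
    intro x hx
    obtain ⟨c, hc, rfl⟩ := Finset.mem_image.1 hx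
    exact Finset.mem_product.2 ⟨Finset.mem_image_of_mem _ hc, Finset.mem_univ _⟩
  have := Finset.card_le_card this
  rw [Finset.card_product, Finset.card_univ, Fintype.card_fin, mul_comm] at this
  exact this

open Classical in
theorem cg_zero {n s : ℕ} (F : Finset (ZMod n → Fin s)) (i : ZMod n) : cgPC F i 0 ≤ 1 := by
  unfold cgPC
  rw [Finset.card_le_one]
  intro a ha b hb
  obtain ⟨c, hc, rfl⟩ := Finset.mem_image.1 ha
  obtain ⟨c', hc', rfl⟩ := Finset.mem_image.1 hb
  rw [cgPre_eq_iff]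
  intro t ht
  omega

theorem cg_iter {n s : ℕ} [NeZero n] (f : ZMod n → Fin s × Fin s → Fin s) (i : ZMod n)
    (k t : ℕ) :
    cgPC (cycleFix n s f) i (k + 1 + 2 * t) ≤ s ^ t * cgPC (cycleFix n s f) i (k + 1) := by
  induction t with
  | zero => simp
  | succ t ih =>
    have := cg_step f i (k + 2 * t)
    have e : k + 2 * t + 1 = k + 1 + 2 * t := by ring
    have e' : k + 1 + 2 * (t + 1) = k + 2 * t + 3 := by ring
    rw [e', pow_succ']
    rw [e] at this
    calc _ ≤ s * cgPC (cycleFix n s f) i (k + 1 + 2 * t) := by omega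
      _ ≤ s * (s ^ t * cgPC (cycleFix n s f) i (k + 1)) := Nat.mul_le_mul_left _ ih
      _ = _ := by ring

open Classical in
theorem cg_full {n s : ℕ} [NeZero n] (f : ZMod n → Fin s × Fin s → Fin s) (i : ZMod n)
    (k : ℕ) (hk : n ≤ k + 1) (hn : 2 ≤ n) :
    (cycleFix n s f).card ≤ cgPC (cycleFix n s f) i k := by
  unfold cgPC
  rw [Finset.card_image_of_injOn]
  intro c hc c' hc' e
  have e := (cgPre_eq_iff _ _ _ _).1 e
  obtain ⟨m, rfl⟩ : ∃ m, n = m + 2 := ⟨n - 2, by omega⟩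
  funext v
  have hv : v = i + (((v - i).val : ℕ) : ZMod (m + 2)) := by
    rw [ZMod.natCast_zmod_val]; ring
  have hlt := ZMod.val_lt (v - i)
  generalize (v - i).val = t at hv hlt
  rw [hv]
  rcases Nat.lt_or_ge t k with h | h
  · exact e t h
  · obtain rfl : t = m + 1 := by omega
    have h0 : i + ((m + 2 : ℕ) : ZMod (m + 2)) = i + ((0 : ℕ) : ZMod (m + 2)) := by
      rw [ZMod.natCast_self]; simp
    rw [cg_fix hc, cg_fix hc', e m (by omega), h0, e 0 (by omega)]

theorem cg_even_upper {s : ℕ} (n : ℕ) [NeZero n] (hn : 4 ≤ n) (he : Even n)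
    (f : ZMod n → Fin s × Fin s → Fin s) : (cycleFix n s f).card ≤ s ^ (n / 2) := by
  obtain ⟨m, rfl⟩ := he
  have h1 := cg_full f 0 (m + m - 1) (by omega) (by omega)
  have h2 := cg_iter f 0 0 (m - 1)
  have e : 0 + 1 + 2 * (m - 1) = m + m - 1 := by omega
  rw [e] at h2
  have h3 := cg_succ (cycleFix (m + m) s f) 0 0
  have h4 := cg_zero (cycleFix (m + m) s f) 0
  have e2 : (m + m) / 2 = m - 1 + 1 := by omega
  rw [e2, pow_succ]
  calc _ ≤ _ := h1
    _ ≤ _ := h2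
    _ ≤ _ := Nat.mul_le_mul_left _ (h3.trans (by nlinarith))

open Classical in
theorem cg_odd_of_deg {s : ℕ} (n a : ℕ) [NeZero n] (hn : 3 ≤ n) (ho : Odd n)
    (f : ZMod n → Fin s × Fin s → Fin s) (p : ZMod n)
    (hp : ∀ x, (Finset.univ.image fun y => f (p + 1) (x, y)).card ≤ a) :
    (cycleFix n s f).card ≤ a * s ^ ((n - 1) / 2) := by
  obtain ⟨m, rfl⟩ := ho
  have h1 := cg_full f p (2 * m) (by omega) (by omega)
  have h2 := cg_iter f p 1 (m - 1)
  have e : 1 + 1 + 2 * (m - 1) = 2 * m := by omega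
  rw [e] at h2
  set F := cycleFix (2 * m + 1) s f with hF
  have h3 : cgPC F p 2 ≤ s * a := by
    have h4 : cgPC F p 2 ≤ (F.image fun c => (⟨c p, c (p + 1)⟩ : (_ : Fin s) × Fin s)).card := by
      apply cg_card_image_le
      intro c hc c' hc' e
      rw [cgPre_eq_iff]
      simp only [Sigma.mk.injEq, heq_eq_eq] at e
      intro t ht
      obtain rfl | rfl : t = 0 ∨ t = 1 := by omega
      · simpa using e.1
      · simpa using e.2
    refine h4.trans ?_
    have h5 : (F.image fun c => (⟨c p, c (p + 1)⟩ : (_ : Fin s) × Fin s)) ⊆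
        (Finset.univ : Finset (Fin s)).sigma
          fun x => Finset.univ.image fun y => f (p + 1) (x, y) := by
      intro x hx
      obtain ⟨c, hc, rfl⟩ := Finset.mem_image.1 hx
      rw [Finset.mem_sigma]
      refine ⟨Finset.mem_univ _, Finset.mem_image.2 ⟨c (p + 1 + 1), Finset.mem_univ _, ?_⟩⟩
      have := (Finset.mem_filter.1 hc).2 (p + 1)
      rw [add_sub_cancel_right] at this
      exact this.symm
    refine (Finset.card_le_card h5).trans ?_
    rw [Finset.card_sigma]
    refine (Finset.sum_le_card_nsmul _ _ a (fun x _ => hp x)).trans ?_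
    simp
  have e2 : (2 * m + 1 - 1) / 2 = m - 1 + 1 := by omega
  rw [e2, pow_succ]
  calc _ ≤ _ := h1
    _ ≤ _ := h2
    _ ≤ s ^ (m - 1) * (s * a) := Nat.mul_le_mul_left _ h3
    _ = _ := by ring

theorem cg_mat {s : ℕ} (hs : 0 < s) (R1 R2 R3 R4 : Fin s → Fin s → ℕ)
    (h12 : ∀ x y, ∑ z, R1 x z * R2 z y = 1) (h23 : ∀ x y, ∑ z, R2 x z * R3 z y = 1)
    (h34 : ∀ x y, ∑ z, R3 x z * R4 z y = 1) :
    ∃ d1 d2, d1 * d2 = s ∧ (∀ x, ∑ z, R1 x z = d1) ∧ (∀ x, ∑ z, R2 x z = d2) := by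
  have key : ∀ (A B C : Fin s → Fin s → ℕ), (∀ x y, ∑ z, A x z * B z y = 1) →
      (∀ x y, ∑ z, B x z * C z y = 1) → ∀ x y, ∑ z, A x z = ∑ z, C z y := by
    intro A B C hAB hBC x y
    calc ∑ z, A x z = ∑ z, A x z * ∑ w, B z w * C w y := by simp [hBC]
      _ = ∑ z, ∑ w, A x z * B z w * C w y := by simp [Finset.mul_sum, mul_assoc]
      _ = ∑ w, ∑ z, A x z * B z w * C w y := Finset.sum_comm
      _ = ∑ w, (∑ z, A x z * B z w) * C w y := by simp [Finset.sum_mul]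
      _ = ∑ w, C w y := by simp [hAB]
  let o : Fin s := ⟨0, hs⟩
  have k1 := key R1 R2 R3 h12 h23
  have k2 := key R2 R3 R4 h23 h34
  refine ⟨∑ z, R1 o z, ∑ z, R2 o z, ?_, ?_, ?_⟩
  · calc (∑ z, R1 o z) * (∑ z, R2 o z) = ∑ z, R1 o z * ∑ w, R2 z w := by
          rw [Finset.sum_mul]
          refine Finset.sum_congr rfl fun z _ => ?_
          rw [k2 o o, k2 z o]
      _ = ∑ z, ∑ w, R1 o z * R2 z w := by simp [Finset.mul_sum]
      _ = ∑ w, ∑ z, R1 o z * R2 z w := Finset.sum_comm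
      _ = s := by simp [h12]
  · intro x; rw [k1 x o, k1 o o]
  · intro x; rw [k2 x o, k2 o o]

open Classical in
noncomputable def cgR {n s : ℕ} (f : ZMod n → Fin s × Fin s → Fin s) (p : ZMod n)
    (x z : Fin s) : ℕ := if ∃ y, f (p + 1) (x, y) = z then 1 else 0

open Classical in
theorem cgR_sum {n s : ℕ} (f : ZMod n → Fin s × Fin s → Fin s) (p : ZMod n) (x : Fin s) :
    ∑ z, cgR f p x z = (Finset.univ.image fun y => f (p + 1) (x, y)).card := by
  unfold cgR
  rw [Finset.sum_boole, Nat.cast_id]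
  congr 1
  ext z
  simp

/-- full window -/
def cgWin {n s : ℕ} (F : Finset (ZMod n → Fin s)) (k : ℕ) (c0 : ZMod n → Fin s) : Prop :=
  c0 ∈ F ∧ ∀ c ∈ F, (∀ t < k, c (t : ZMod n) = c0 (t : ZMod n)) → ∀ j, k ≤ j → j < k + 6 →
    ∀ y, ∃ c' ∈ F, (∀ t < j, c' (t : ZMod n) = c (t : ZMod n)) ∧
      c' ((j + 1 : ℕ) : ZMod n) = y

theorem cg_fix0 {n s : ℕ} [NeZero n] {f : ZMod n → Fin s × Fin s → Fin s}
    {c : ZMod n → Fin s} (hc : c ∈ cycleFix n s f) (k : ℕ) :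
    c ((k + 1 : ℕ) : ZMod n) = f ((k + 1 : ℕ) : ZMod n)
      (c (k : ZMod n), c ((k + 2 : ℕ) : ZMod n)) := by
  simpa only [zero_add] using cg_fix hc 0 k

theorem cg_win_prod {n s : ℕ} [NeZero n] (f : ZMod n → Fin s × Fin s → Fin s) (k : ℕ)
    (c0 : ZMod n → Fin s) (h : cgWin (cycleFix n s f) k c0) (p : ℕ) (hp : k + 1 ≤ p)
    (hp' : p ≤ k + 3) (x y : Fin s) :
    ∑ z, cgR f (p : ZMod n) x z * cgR f ((p + 1 : ℕ) : ZMod n) z y = 1 := by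
  obtain ⟨hc0, h⟩ := h
  -- position p takes value x
  obtain ⟨c1, hc1, a1, b1⟩ := h c0 hc0 (fun _ _ => rfl) (p - 1) (by omega) (by omega) x
  rw [Nat.sub_add_cancel (by omega)] at b1
  have a1' : ∀ t < k, c1 (t : ZMod n) = c0 (t : ZMod n) := fun t ht => a1 t (by omega)
  have key : ∀ y' , ∀ z, f ((p + 1 : ℕ) : ZMod n) (x, y') = z → ∀ w,
      (f ((p + 1 : ℕ) : ZMod n) (x, w) = z ↔ ∃ v, f ((p + 2 : ℕ) : ZMod n) (z, v) = w) := by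
    intro y' z hz w
    obtain ⟨c2, hc2, a2, b2⟩ := h c1 hc1 a1' (p + 1) (by omega) (by omega) y'
    have a2' : ∀ t < k, c2 (t : ZMod n) = c0 (t : ZMod n) := fun t ht => by
      rw [a2 t (by omega), a1' t ht]
    have x2 : c2 (p : ZMod n) = x := by rw [a2 p (by omega), b1]
    have z2 : c2 ((p + 1 : ℕ) : ZMod n) = z := by
      rw [cg_fix0 hc2, x2, ← hz]; congr 2
    constructor
    · intro hw
      obtain ⟨c3, hc3, a3, b3⟩ := h c2 hc2 a2' (p + 1) (by omega) (by omega) w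
      have x3 : c3 (p : ZMod n) = x := by rw [a3 p (by omega), x2]
      have b3' : c3 ((p + 2 : ℕ) : ZMod n) = w := b3
      have z3 : c3 ((p + 1 : ℕ) : ZMod n) = z := by
        rw [cg_fix0 hc3, x3, b3', hw]
      refine ⟨c3 ((p + 3 : ℕ) : ZMod n), ?_⟩
      have := cg_fix0 hc3 (p + 1)
      rw [z3] at this
      rw [← b3']
      exact this.symm
    · rintro ⟨v, hv⟩
      obtain ⟨c3, hc3, a3, b3⟩ := h c2 hc2 a2' (p + 2) (by omega) (by omega) v
      have x3 : c3 (p : ZMod n) = x := by rw [a3 p (by omega), x2]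
      have z3 : c3 ((p + 1 : ℕ) : ZMod n) = z := by rw [a3 (p + 1) (by omega), z2]
      have w3 : c3 ((p + 2 : ℕ) : ZMod n) = w := by
        have := cg_fix0 hc3 (p + 1)
        rw [z3] at this
        rw [← hv, ← b3]
        exact this
      have := cg_fix0 hc3 p
      rw [x3, z3, w3] at this
      exact this.symm
  have e1 : (p : ZMod n) + 1 = ((p + 1 : ℕ) : ZMod n) := by push_cast; ring
  have e2 : ((p + 1 : ℕ) : ZMod n) + 1 = ((p + 2 : ℕ) : ZMod n) := by push_cast; ring
  rw [Finset.sum_eq_single (f ((p + 1 : ℕ) : ZMod n) (x, y))]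
  · unfold cgR
    rw [e1, e2, if_pos ⟨y, rfl⟩, if_pos ((key y _ rfl y).1 rfl)]
  · intro z _ hz
    unfold cgR
    rw [e1, e2]
    by_cases h1 : ∃ y, f ((p + 1 : ℕ) : ZMod n) (x, y) = z
    · obtain ⟨y', hy'⟩ := h1
      have : ¬ ∃ v, f ((p + 2 : ℕ) : ZMod n) (z, v) = y := by
        intro hh
        exact hz ((key y' z hy' y).2 hh).symm
      rw [if_neg this, mul_zero]
    · rw [if_neg h1, zero_mul]
  · intro hh; exact absurd (Finset.mem_univ _) hh

theorem cg_win_bound {s a : ℕ} (hs : 2 ≤ s)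
    (ha : ∀ d : ℕ, d ∣ s → d * d ≤ s → d ≤ a) (n : ℕ) [NeZero n] (hn : 3 ≤ n) (ho : Odd n)
    (f : ZMod n → Fin s × Fin s → Fin s) (k : ℕ)
    (c0 : ZMod n → Fin s) (h : cgWin (cycleFix n s f) k c0) :
    (cycleFix n s f).card ≤ a * s ^ ((n - 1) / 2) := by
  obtain ⟨d1, d2, hd, h1, h2⟩ := cg_mat (by omega) _ _ _ _
    (cg_win_prod f k c0 h (k + 1) (by omega) (by omega))
    (cg_win_prod f k c0 h (k + 2) (by omega) (by omega))
    (cg_win_prod f k c0 h (k + 3) (by omega) (by omega))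
  rcases le_total d1 d2 with hle | hle
  · refine cg_odd_of_deg n a hn ho f ((k + 1 : ℕ) : ZMod n) fun x => ?_
    have := h1 x
    rw [cgR_sum] at this
    refine le_trans (le_of_eq ?_) (ha d1 ⟨d2, hd.symm⟩ (by nlinarith))
    convert this
  · refine cg_odd_of_deg n a hn ho f ((k + 2 : ℕ) : ZMod n) fun x => ?_
    have := h2 x
    rw [cgR_sum] at this
    refine le_trans (le_of_eq ?_) (ha d2 ⟨d1, by rw [← hd, mul_comm]⟩ (by nlinarith))
    convert this

open Classical in
theorem cg_nowin {n s : ℕ} [NeZero n] (F : Finset (ZMod n → Fin s)) (k : ℕ)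
    (h : ∀ c0, ¬ cgWin F k c0) :
    cgPC F 0 k ≤ ∑ j ∈ Finset.range 6, (cgD F 0 (k + j)).card := by
  let r : (ℕ → Option (Fin s)) → (ℕ → Option (Fin s)) := fun v t => if t < k then v t else none
  have hsub : F.image (cgPre 0 k) ⊆ (Finset.range 6).biUnion fun j => (cgD F 0 (k + j)).image r := by
    intro w hw
    obtain ⟨c0, hc0, rfl⟩ := Finset.mem_image.1 hw
    have := h c0
    unfold cgWin at this
    push Not at this
    obtain ⟨c, hc, hag, j, hj1, hj2, y, hy⟩ := this hc0
    obtain ⟨j, rfl⟩ := Nat.exists_eq_add_of_le hj1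
    rw [Finset.mem_biUnion]
    refine ⟨j, Finset.mem_range.2 (by omega), Finset.mem_image.2 ⟨cgPre 0 (k + j) c, ?_, ?_⟩⟩
    · refine (cgD_mem _ _ _ _).2 ⟨Finset.mem_image_of_mem _ hc, y, ?_⟩
      intro c' hc' e
      rw [cgPre_eq_iff] at e
      simp only [zero_add] at e ⊢
      exact hy c' hc' e
    · funext t
      by_cases ht : t < k
      · have : t < k + j := by omega
        simp [r, cgPre, ht, this, hag t ht]
      · simp [r, cgPre, ht]
  refine (Finset.card_le_card hsub).trans (Finset.card_biUnion_le.trans ?_)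
  exact Finset.sum_le_sum fun j _ => Finset.card_image_le

theorem cg_decay (s : ℕ) (hs : 2 ≤ s) : ∃ q : ℕ, ∀ (A D : ℕ → ℕ),
    (∀ k, A (k + 1) ≤ s * A k) → A 0 ≤ 1 →
    (∀ k, A (k + 3) + D (k + 1) ≤ s * A (k + 1)) →
    (∀ k, A (k + 1) ≤ ∑ j ∈ Finset.range 6, D (k + 1 + j)) →
    ∀ l, A (1 + 6 * q + l) * A (1 + 6 * q + l + 1) ≤ s ^ (6 * q + l + 1) := by
  have hs0 : (0 : ℝ) < s := by positivity
  have hs1 : (1 : ℝ) ≤ s := by exact_mod_cast (by omega : 1 ≤ s)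
  set ρ : ℝ := 1 - 1 / (6 * s ^ 6) with hρ
  have hρ1 : ρ < 1 := by
    have : (0 : ℝ) < 1 / (6 * s ^ 6) := by positivity
    linarith
  have hρ0 : 0 ≤ ρ := by
    have h6 : (1 : ℝ) ≤ s ^ 6 := one_le_pow₀ hs1
    have : 1 / (6 * (s : ℝ) ^ 6) ≤ 1 := by
      rw [div_le_one (by positivity)]; linarith
    linarith
  obtain ⟨q, hq⟩ := exists_pow_lt_of_lt_one (show (0 : ℝ) < 1 / s ^ 2 by positivity) hρ1
  refine ⟨q, ?_⟩
  intro A D h1 h0 h2 h3 l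
  set φ : ℕ → ℝ := fun k => (A (k + 1) : ℝ) * A (k + 2) with hφ
  have hφ0 : ∀ k, 0 ≤ φ k := fun k => by positivity
  have st : ∀ k, φ (k + 1) ≤ s * φ k := by
    intro k
    have h : (A (k + 3) : ℝ) ≤ s * A (k + 1) := by
      exact_mod_cast (le_trans (Nat.le_add_right _ _) (h2 k))
    calc φ (k + 1) = A (k + 2) * A (k + 3) := rfl
      _ ≤ A (k + 2) * (s * A (k + 1)) := by gcongr
      _ = _ := by simp only [hφ]; ring
  have st' : ∀ t k, φ (k + t) ≤ s ^ t * φ k := by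
    intro t k
    induction t with
    | zero => simp
    | succ t ih =>
      calc φ (k + t + 1) ≤ s * φ (k + t) := st _
        _ ≤ s * (s ^ t * φ k) := by gcongr
        _ = _ := by ring
  have hA : ∀ t k, (A (k + t) : ℝ) ≤ s ^ t * A k := by
    intro t k
    induction t with
    | zero => simp
    | succ t ih =>
      calc (A (k + t + 1) : ℝ) ≤ s * A (k + t) := by exact_mod_cast h1 _
        _ ≤ s * (s ^ t * A k) := by gcongr
        _ = _ := by ring
  have big : ∀ k, φ (k + 6) ≤ ρ * s ^ 6 * φ k := by
    intro k
    obtain ⟨j, hj, hjD⟩ : ∃ j ∈ Finset.range 6, (A (k + 1) : ℝ) / 6 ≤ D (k + 1 + j) := by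
      by_contra hcon
      push Not at hcon
      have h4 : ∑ j ∈ Finset.range 6, (D (k + 1 + j) : ℝ) < ∑ j ∈ Finset.range 6, (A (k + 1) : ℝ) / 6 :=
        Finset.sum_lt_sum_of_nonempty ⟨0, by simp⟩ hcon
      have h5 : (A (k + 1) : ℝ) ≤ ∑ j ∈ Finset.range 6, (D (k + 1 + j) : ℝ) := by
        exact_mod_cast h3 k
      rw [Finset.sum_const, Finset.card_range, nsmul_eq_mul] at h4
      push_cast at h4
      linarith
    rw [Finset.mem_range] at hj
    have hAj : (A (k + j + 1) : ℝ) ≤ s ^ 5 * A (k + 1) := by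
      have := hA j (k + 1)
      rw [show k + 1 + j = k + j + 1 by ring] at this
      refine this.trans ?_
      have : (s : ℝ) ^ j ≤ s ^ 5 := pow_le_pow_right₀ hs1 (by omega)
      gcongr
    have hstep : (A (k + j + 3) : ℝ) ≤ ρ * s * A (k + j + 1) := by
      have h6 : (A (k + j + 3) : ℝ) + D (k + j + 1) ≤ s * A (k + j + 1) := by
        exact_mod_cast h2 (k + j)
      rw [show k + 1 + j = k + j + 1 by ring] at hjD
      have h7 : (A (k + j + 1) : ℝ) / (6 * s ^ 5) ≤ D (k + j + 1) := by
        refine le_trans ?_ hjD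
        rw [div_le_div_iff₀ (by positivity) (by positivity)]
        nlinarith
      have h8 : ρ * s * A (k + j + 1) = s * A (k + j + 1) - A (k + j + 1) / (6 * s ^ 5) := by
        rw [hρ]; field_simp
      rw [h8]; linarith
    have h9 : φ (k + j + 1) ≤ ρ * s * φ (k + j) := by
      calc φ (k + j + 1) = A (k + j + 2) * A (k + j + 3) := rfl
        _ ≤ A (k + j + 2) * (ρ * s * A (k + j + 1)) := by gcongr
        _ = _ := by simp only [hφ]; ring
    have e : k + 6 = k + j + 1 + (5 - j) := by omega
    have e6 : (s : ℝ) ^ 6 = s ^ (5 - j) * s * s ^ j := by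
      rw [← pow_succ, ← pow_add]; congr 1; omega
    calc φ (k + 6) = φ (k + j + 1 + (5 - j)) := by rw [e]
      _ ≤ s ^ (5 - j) * φ (k + j + 1) := st' _ _
      _ ≤ s ^ (5 - j) * (ρ * s * φ (k + j)) := by gcongr
      _ ≤ s ^ (5 - j) * (ρ * s * (s ^ j * φ k)) := by gcongr; exact st' _ _
      _ = _ := by rw [e6]; ring
  have bigq : ∀ q, φ (6 * q) ≤ ρ ^ q * s ^ (6 * q) * φ 0 := by
    intro q
    induction q with
    | zero => simp
    | succ q ih =>
      calc φ (6 * q + 6) ≤ ρ * s ^ 6 * φ (6 * q) := big _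
        _ ≤ ρ * s ^ 6 * (ρ ^ q * s ^ (6 * q) * φ 0) := by gcongr
        _ = _ := by ring
  have hφi : φ 0 ≤ s ^ 3 := by
    have a0 : (A 0 : ℝ) ≤ 1 := by exact_mod_cast h0
    have a1 : (A 1 : ℝ) ≤ s := by
      have := hA 1 0
      simp only [zero_add, pow_one] at this
      nlinarith
    have a2 : (A 2 : ℝ) ≤ s ^ 2 := by
      have := hA 2 0
      simp only [zero_add] at this
      nlinarith [pow_pos hs0 2]
    calc φ 0 = A 1 * A 2 := rfl
      _ ≤ s * s ^ 2 := by gcongr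
      _ = _ := by ring
  have fin : φ (6 * q + l) ≤ (s : ℝ) ^ (6 * q + l + 1) := by
    calc φ (6 * q + l) ≤ s ^ l * φ (6 * q) := st' _ _
      _ ≤ s ^ l * (ρ ^ q * s ^ (6 * q) * φ 0) := by gcongr; exact bigq q
      _ ≤ s ^ l * (1 / s ^ 2 * s ^ (6 * q) * s ^ 3) := by gcongr
      _ = _ := by field_simp; ring
  have : ((A (1 + 6 * q + l) * A (1 + 6 * q + l + 1) : ℕ) : ℝ) ≤ ((s ^ (6 * q + l + 1) : ℕ) : ℝ) := by
    push_cast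
    rw [show 1 + 6 * q + l = 6 * q + l + 1 by ring]
    exact fin
  exact_mod_cast this

theorem cg_odd_upper (s a : ℕ) (hs : 2 ≤ s) (ha1 : 1 ≤ a)
    (ha : ∀ d : ℕ, d ∣ s → d * d ≤ s → d ≤ a) :
    ∃ N : ℕ, 2 ≤ N ∧ ∀ (n : ℕ) [NeZero n], N < n → Odd n →
      ∀ f : ZMod n → Fin s × Fin s → Fin s,
        (cycleFix n s f).card ≤ a * s ^ ((n - 1) / 2) := by
  obtain ⟨q, hq⟩ := cg_decay s hs
  refine ⟨6 * q + 2, by omega, ?_⟩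
  intro n _ hn ho f
  by_cases hw : ∃ k c0, cgWin (cycleFix n s f) k c0
  · obtain ⟨k, c0, h⟩ := hw
    exact cg_win_bound hs ha n (by omega) ho f k c0 h
  · push Not at hw
    have key := hq (cgPC (cycleFix n s f) 0) (fun k => (cgD (cycleFix n s f) 0 k).card)
      (cg_succ _ _) (cg_zero _ _) (cg_step f 0) (fun k => cg_nowin _ _ (hw _)) (n - 2 - 6 * q)
    have e : 1 + 6 * q + (n - 2 - 6 * q) = n - 1 := by omega
    have e' : 6 * q + (n - 2 - 6 * q) + 1 = n - 1 := by omega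
    rw [e, e'] at key
    have m1 := cg_full f 0 (n - 1) (by omega) (by omega)
    have m2 := cg_full f 0 (n - 1 + 1) (by omega) (by omega)
    have m3 := (Nat.mul_le_mul m1 m2).trans key
    obtain ⟨m, rfl⟩ := ho
    have e3 : (2 * m + 1 - 1) / 2 = m := by omega
    rw [e3]
    rw [show 2 * m + 1 - 1 = m + m by omega, pow_add] at m3
    have := Nat.mul_self_le_mul_self_iff.1 m3
    nlinarith [Nat.zero_le (s ^ m)]

theorem cg_val_sub {n : ℕ} [NeZero n] (k : ℕ) (hk : k + 1 < n) :
    (((k + 1 : ℕ) : ZMod n) - 1).val = k := by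
  have : ((k + 1 : ℕ) : ZMod n) - 1 = (k : ZMod n) := by push_cast; ring
  rw [this, ZMod.val_natCast_of_lt (by omega)]

theorem cg_val_add {n : ℕ} [NeZero n] (k : ℕ) (hk : k + 1 < n) :
    ((k : ZMod n) + 1).val = k + 1 := by
  have : (k : ZMod n) + 1 = ((k + 1 : ℕ) : ZMod n) := by push_cast; ring
  rw [this, ZMod.val_natCast_of_lt (by omega)]

theorem cg_even_lower {s : ℕ} (n : ℕ) [NeZero n] (hn : 4 ≤ n) (he : Even n) :
    ∃ f : ZMod n → Fin s × Fin s → Fin s, s ^ (n / 2) ≤ (cycleFix n s f).card := by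
  refine ⟨fun i p => if i.val % 2 = 0 then p.2 else p.1, ?_⟩
  have hm : ∀ i : ZMod n, i.val / 2 < n / 2 := by
    intro i
    have := ZMod.val_lt i
    obtain ⟨m, rfl⟩ := he
    omega
  have hc : s ^ (n / 2) = (Finset.univ : Finset (Fin (n / 2) → Fin s)).card := by simp
  rw [hc]
  apply Finset.card_le_card_of_injOn (fun w (i : ZMod n) => w ⟨i.val / 2, hm i⟩)
  · intro w _
    refine Finset.mem_coe.2 (Finset.mem_filter.2 ⟨Finset.mem_univ _, ?_⟩)
    intro i
    obtain ⟨k, hk, rfl⟩ : ∃ k, k < n ∧ i = (k : ZMod n) :=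
      ⟨i.val, ZMod.val_lt i, by simp⟩
    have hkv := ZMod.val_natCast_of_lt hk
    by_cases h : k % 2 = 0
    · have hk1 : k + 1 < n := by
        obtain ⟨m, rfl⟩ := he
        omega
      have := cg_val_add k hk1
      simp only [hkv, h, if_true]
      congr 1
      apply Fin.ext
      simp only [this]
      omega
    · obtain ⟨j, rfl⟩ : ∃ j, k = j + 1 := ⟨k - 1, by omega⟩
      have := cg_val_sub j hk
      simp only [hkv, h, if_false]
      congr 1
      apply Fin.ext
      simp only [this]
      omega
  · intro w _ w' _ e
    funext t
    have := congrFun e (((2 * t.1 : ℕ)) : ZMod n)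
    have ht := t.2
    have hv : (((2 * t.1 : ℕ)) : ZMod n).val = 2 * t.1 := ZMod.val_natCast_of_lt (by omega)
    simp only [hv] at this
    have e2 : 2 * t.1 / 2 = t.1 := by omega
    simpa only [e2] using this

theorem cg_fcp_lower {s a : ℕ} (b : ℕ) (ha : 1 ≤ a) (hab : a ≤ b) (n : ℕ) [NeZero n]
    (hn : 3 ≤ n) (ho : Odd n) (π : ZMod a × ZMod b ≃ Fin s) :
    a * s ^ ((n - 1) / 2) ≤ (cycleFix n s (fcpProtocol n s a b π)).card := by
  haveI : NeZero a := ⟨by omega⟩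
  haveI : NeZero b := ⟨by omega⟩
  obtain ⟨m, rfl⟩ := ho
  have em : (2 * m + 1 - 1) / 2 = m := by omega
  rw [em]
  have hm : 1 ≤ m := by omega
  have hcard : a * s ^ m = (Finset.univ : Finset (ZMod a × (Fin m → Fin s))).card := by
    simp [ZMod.card]
  have hs : 0 < s := by
    have : Nonempty (Fin s) := ⟨π 0⟩
    exact Fin.pos_iff_nonempty.2 this
  -- total extension of the free letters
  let W : (Fin m → Fin s) → ℕ → Fin s := fun w t => if h : t < m then w ⟨t, h⟩ else ⟨0, hs⟩
  let X : ZMod a × (Fin m → Fin s) → ℕ → ZMod a := fun g k =>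
    if k = 0 then g.1 else fcpPhi π (W g.2 ((k - 1) / 2))
  let Y : ZMod a × (Fin m → Fin s) → ℕ → ZMod b := fun g k =>
    if k = 0 then fcpPsi π (W g.2 (m - 1)) else
    if k = 1 then ((g.1.val : ℕ) : ZMod b) else fcpPsi π (W g.2 (k / 2 - 1))
  have pφ : ∀ x y, fcpPhi π (π (x, y)) = x := by intro x y; simp [fcpPhi]
  have pψ : ∀ x y, fcpPsi π (π (x, y)) = y := by intro x y; simp [fcpPsi]
  rw [hcard]
  apply Finset.card_le_card_of_injOn
    (fun g (i : ZMod (2 * m + 1)) => π (X g i.val, Y g i.val))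
  · intro g _
    refine Finset.mem_coe.2 (Finset.mem_filter.2 ⟨Finset.mem_univ _, ?_⟩)
    intro i
    obtain ⟨k, hk, rfl⟩ : ∃ k, k < 2 * m + 1 ∧ i = (k : ZMod (2 * m + 1)) :=
      ⟨i.val, ZMod.val_lt i, by simp⟩
    have hkv := ZMod.val_natCast_of_lt hk
    simp only [fcpProtocol, pφ, pψ, hkv]
    by_cases h1 : k = 1
    · subst h1
      have e1 := cg_val_sub (n := 2 * m + 1) 0 hk
      have e2 := cg_val_add (n := 2 * m + 1) 1 (by omega)
      simp only [zero_add] at e1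
      rw [e1, e2]
      simp [X, Y]
    by_cases h0 : k = 0
    · subst h0
      have e1 : (((0 : ℕ) : ZMod (2 * m + 1)) - 1).val = 2 * m := by
        have : ((0 : ℕ) : ZMod (2 * m + 1)) - 1 = ((2 * m : ℕ) : ZMod (2 * m + 1)) := by
          have h := ZMod.natCast_self (2 * m + 1)
          rw [Nat.cast_succ] at h
          rw [Nat.cast_zero, ← h]; ring
        rw [this, ZMod.val_natCast_of_lt (by omega)]
      have e2 := cg_val_add (n := 2 * m + 1) 0 (by omega)
      rw [e1, e2]
      have e3 : ((g.1.val : ℕ) : ZMod b).val = g.1.val :=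
        ZMod.val_natCast_of_lt (lt_of_lt_of_le (ZMod.val_lt _) hab)
      have e4 : 2 * m ≠ 0 := by omega
      have e5 : 2 * m ≠ 1 := by omega
      have e6 : 2 * m / 2 - 1 = m - 1 := by omega
      have f1 : X g 0 = g.1 := by simp [X]
      have f2 : Y g (0 + 1) = ((g.1.val : ℕ) : ZMod b) := by simp [Y]
      have f3 : Y g (2 * m) = Y g 0 := by simp only [Y, e4, e5, e6, if_false, if_true]
      rw [if_neg h1, if_pos rfl, f1, f2, f3, e3, ZMod.natCast_zmod_val]
    obtain ⟨j, rfl⟩ : ∃ j, k = j + 1 := ⟨k - 1, by omega⟩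
    have e1 := cg_val_sub (n := 2 * m + 1) j hk
    rw [if_neg h1, if_neg h0, e1]
    by_cases h2 : (j + 1) % 2 = 0
    · rw [if_pos h2]
      have x : X g (j + 1) = X g j := by
        simp only [X, h0, if_false, show j ≠ 0 by omega]
        congr 2; omega
      have y : Y g (j + 1) = Y g ((((j + 1 : ℕ) : ZMod (2 * m + 1)) + 1).val) := by
        rcases Nat.lt_or_ge (j + 1) (2 * m) with hj | hj
        swap
        · have hj' : j + 1 = 2 * m := by omega
          have e2 : (((j + 1 : ℕ) : ZMod (2 * m + 1)) + 1).val = 0 := by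
            have h := ZMod.natCast_self (2 * m + 1)
            rw [Nat.cast_succ] at h
            rw [hj', h, ZMod.val_zero]
          rw [e2]
          simp only [Y, h0, h1, if_false, if_true]
          congr 2; omega
        have e2 := cg_val_add (n := 2 * m + 1) (j + 1) (by omega)
        rw [e2]
        simp only [Y, h0, if_false, show j + 1 ≠ 1 by omega, show j + 1 + 1 ≠ 0 by omega, show j + 1 + 1 ≠ 1 by omega]
        congr 2; omega
      rw [x, y]
    · rw [if_neg h2]
      have y : Y g (j + 1) = Y g j := by
        simp only [Y, h0, h1, if_false, show j ≠ 0 by omega, show j ≠ 1 by omega]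
        congr 2; omega
      have x : X g (j + 1) = X g ((((j + 1 : ℕ) : ZMod (2 * m + 1)) + 1).val) := by
        have e2 := cg_val_add (n := 2 * m + 1) (j + 1) (by omega)
        rw [e2]
        simp only [X, h0, if_false, show j + 1 + 1 ≠ 0 by omega]
        congr 2; omega
      rw [x, y]
  · intro g _ g' _ e
    have ex : ∀ k, k < 2 * m + 1 → X g k = X g' k ∧ Y g k = Y g' k := by
      intro k hk
      have := congrFun e ((k : ℕ) : ZMod (2 * m + 1))
      simp only [ZMod.val_natCast_of_lt hk, EmbeddingLike.apply_eq_iff_eq, Prod.mk.injEq] at this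
      exact this
    refine Prod.ext ?_ ?_
    · exact (ex 0 (by omega)).1
    · funext t
      have ht := t.2
      have hx := (ex (2 * t.1 + 1) (by omega)).1
      have hy := (ex (2 * t.1 + 2) (by omega)).2
      have e1 : (2 * t.1 + 1 - 1) / 2 = t.1 := by omega
      have e2 : (2 * t.1 + 2) / 2 - 1 = t.1 := by omega
      simp only [X, W, e1, ht, dif_pos, show 2 * t.1 + 1 ≠ 0 by omega, if_false] at hx
      simp only [Y, W, e2, ht, dif_pos, show 2 * t.1 + 2 ≠ 0 by omega,
        show 2 * t.1 + 2 ≠ 1 by omega, if_false] at hy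
      exact π.symm.injective (Prod.ext hx hy)

/-- For every integer `s ≥ 2`, let `a` be the greatest divisor of
`s` with `a ≤ √s`.  Then for every even `n ≥ 4` the maximum of `fix(P)` over all
protocols `P` on `C_n` with `s` colours is `s^{n/2}` (i.e. `gn(C_n,s) = n/2`); and
there is an `N` such that for every odd `n > N` the maximum of `fix(P)` is
`a · s^{(n-1)/2}` (i.e. `gn(C_n,s) = (n-1)/2 + log_s a`), and this maximum is
attained by the fractional-clique-partition protocol `P_fcp`. -/
theorem cycle_guessing_stmt18 (s a : ℕ) (hs : 2 ≤ s)
    (ha : a ∣ s ∧ a * a ≤ s ∧ ∀ d : ℕ, d ∣ s → d * d ≤ s → d ≤ a) :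
    (∀ (n : ℕ) [NeZero n], 4 ≤ n → Even n →
      IsGreatest {m : ℕ | ∃ f : ZMod n → Fin s × Fin s → Fin s,
        (cycleFix n s f).card = m} (s ^ (n / 2))) ∧
    ∃ N : ℕ, ∀ (n : ℕ) [NeZero n], N < n → Odd n →
      IsGreatest {m : ℕ | ∃ f : ZMod n → Fin s × Fin s → Fin s,
        (cycleFix n s f).card = m} (a * s ^ ((n - 1) / 2)) ∧
      ∀ π : ZMod a × ZMod (s / a) ≃ Fin s,
        (cycleFix n s (fcpProtocol n s a (s / a) π)).card = a * s ^ ((n - 1) / 2) := by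
  obtain ⟨had, haa, hmax⟩ := ha
  have ha1 : 1 ≤ a := Nat.pos_of_dvd_of_pos had (by omega)
  have hab : a ≤ s / a := (Nat.le_div_iff_mul_le ha1).2 haa
  refine ⟨?_, ?_⟩
  · intro n _ hn he
    refine ⟨?_, ?_⟩
    · obtain ⟨f, hf⟩ := cg_even_lower (s := s) n hn he
      exact ⟨f, le_antisymm (cg_even_upper n hn he f) hf⟩
    · rintro x ⟨f, rfl⟩
      exact cg_even_upper n hn he f
  · obtain ⟨N, hN2, hN⟩ := cg_odd_upper s a hs ha1 hmax
    refine ⟨N, ?_⟩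
    intro n _ hn ho
    have fcp : ∀ π : ZMod a × ZMod (s / a) ≃ Fin s,
        (cycleFix n s (fcpProtocol n s a (s / a) π)).card = a * s ^ ((n - 1) / 2) := fun π =>
      le_antisymm (hN n hn ho _) (cg_fcp_lower (s / a) ha1 hab n (by omega) ho π)
    refine ⟨⟨?_, ?_⟩, fcp⟩
    · haveI : NeZero a := ⟨by omega⟩
      haveI : NeZero (s / a) := ⟨by omega⟩
      have hc : Fintype.card (ZMod a × ZMod (s / a)) = Fintype.card (Fin s) := by
        rw [Fintype.card_prod, ZMod.card, ZMod.card, Fintype.card_fin, Nat.mul_div_cancel' had]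
      exact ⟨_, fcp (Fintype.equivOfCardEq hc)⟩
    · rintro x ⟨f, rfl⟩
      exact hN n hn ho f
end

section
/- For every integer s ≥ 2, let b be the smallest divisor of s with b ≥ √s. There exists a natural number N such that for every odd integer n > N, the chromatic number of the confusion graph 𝔠_s(C_n) equals b · s^{(n−1)/2}; equivalently, the information defect satisfies β(C_n, s) = (n−1)/2 + log_s b. -/
open Finset

/-- The confusion graph `𝔠_s(C_n)`: vertices are the colourings `Z_s^n` of the cycle
`C_n`, and two colourings `c, c'` are adjacent iff there is an index `i` (modulo `n`)
with `c i ≠ c' i` but `c (i-1) = c' (i-1)` and `c (i+1) = c' (i+1)`. -/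
def confusionGraph (n s : ℕ) [NeZero n] : SimpleGraph (ZMod n → Fin s) where
  Adj c c' := ∃ i : ZMod n,
    c i ≠ c' i ∧ c (i - 1) = c' (i - 1) ∧ c (i + 1) = c' (i + 1)
  symm := by
    constructor
    rintro c c' ⟨i, h1, h2, h3⟩
    exact ⟨i, h1.symm, h2.symm, h3.symm⟩
  loopless := by
    constructor
    rintro c ⟨i, h1, -, -⟩
    exact h1 rfl

def Vac {α : Type*} (f g h : α → α → α) : Prop := ∀ x y z, g (f x y) (h y z) = y

open Classical in
lemma vac_half {α : Type*} [Fintype α] (f0 f1 f2 f3 f4 f5 f6 : α → α → α)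
    (h1 : Vac f0 f1 f2) (h2 : Vac f1 f2 f3) (h3 : Vac f2 f3 f4) (h4 : Vac f3 f4 f5)
    (h5 : Vac f4 f5 f6) (p : α) :
    Fintype.card {y : α // ∃ z, f2 p z = y} *
      Fintype.card {e : α × α // ∃ w, f5 e.1 w = e.2} = Fintype.card α * Fintype.card α := by
  rw [← Fintype.card_prod, ← Fintype.card_prod]
  symm
  refine Fintype.card_congr
    { toFun := fun x => (⟨f2 p x.1, x.1, rfl⟩, ⟨(f4 x.1 x.2, x.2), f6 x.2 p, h5 _ _ _⟩)
      invFun := fun y => (f3 y.1.1 y.2.1.1, y.2.1.2)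
      left_inv := ?_
      right_inv := ?_ }
  · rintro ⟨x, y⟩
    simp only [h3 p x y]
  · rintro ⟨⟨x2, z, hz⟩, ⟨⟨x4, x5⟩, w, hw⟩⟩
    simp only at hz hw
    have e1 : f1 (f0 p p) x2 = p := by rw [← hz]; exact h1 _ _ _
    have e2 : f2 p (f3 x2 x4) = x2 := by
      have := h2 (f0 p p) x2 x4
      rwa [e1] at this
    have e4 : f4 (f3 x2 x4) x5 = x4 := by
      have := h4 x2 x4 w
      rwa [hw] at this
    simp only [e2, e4]

open Classical in
lemma card_edge_sigma {α : Type*} [Fintype α] (P : α → α → Prop) :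
    Fintype.card {e : α × α // P e.1 e.2} = ∑ p : α, Fintype.card {y : α // P p y} := by
  rw [← Fintype.card_sigma]
  exact Fintype.card_congr
    { toFun := fun e => ⟨e.1.1, e.1.2, e.2⟩
      invFun := fun x => ⟨(x.1, x.2.1), x.2.2⟩
      left_inv := fun _ => rfl
      right_inv := fun _ => rfl }

open Classical in
lemma vac_struct {α : Type*} [Fintype α] [Nonempty α] (f0 f1 f2 f3 f4 f5 f6 : α → α → α)
    (h1 : Vac f0 f1 f2) (h2 : Vac f1 f2 f3) (h3 : Vac f2 f3 f4) (h4 : Vac f3 f4 f5)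
    (h5 : Vac f4 f5 f6) :
    ∃ r l : ℕ, r * l = Fintype.card α ∧
      Fintype.card {e : α × α // ∃ w, f2 e.1 w = e.2} = Fintype.card α * r ∧
      Fintype.card {e : α × α // ∃ w, f5 e.1 w = e.2} = Fintype.card α * l := by
  have A := vac_half f0 f1 f2 f3 f4 f5 f6 h1 h2 h3 h4 h5
  have B := vac_half (fun x y => f6 y x) (fun x y => f5 y x) (fun x y => f4 y x)
    (fun x y => f3 y x) (fun x y => f2 y x) (fun x y => f1 y x) (fun x y => f0 y x)
    (fun x y z => h5 z y x) (fun x y z => h4 z y x) (fun x y z => h3 z y x)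
    (fun x y z => h2 z y x) (fun x y z => h1 z y x)
  have p : α := Classical.arbitrary α
  have hs : 0 < Fintype.card α := Fintype.card_pos
  have C1 : Fintype.card {e : α × α // ∃ w, f1 w e.1 = e.2}
      = Fintype.card {e : α × α // ∃ w, f2 e.1 w = e.2} := by
    refine Fintype.card_congr ((Equiv.prodComm α α).subtypeEquiv ?_)
    rintro ⟨y, x⟩
    simp only [Equiv.prodComm_apply, Prod.swap]
    constructor
    · rintro ⟨w, hw⟩
      exact ⟨f3 y p, by rw [← hw]; exact h2 _ _ _⟩
    · rintro ⟨w, hw⟩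
      exact ⟨f0 p x, by rw [← hw]; exact h1 _ _ _⟩
  have C2 : Fintype.card {e : α × α // ∃ w, f4 w e.1 = e.2}
      = Fintype.card {e : α × α // ∃ w, f5 e.1 w = e.2} := by
    refine Fintype.card_congr ((Equiv.prodComm α α).subtypeEquiv ?_)
    rintro ⟨y, x⟩
    simp only [Equiv.prodComm_apply, Prod.swap]
    constructor
    · rintro ⟨w, hw⟩
      exact ⟨f6 y p, by rw [← hw]; exact h5 _ _ _⟩
    · rintro ⟨w, hw⟩
      exact ⟨f3 p x, by rw [← hw]; exact h4 _ _ _⟩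
  rw [C1] at B
  have S1 : Fintype.card {e : α × α // ∃ w, f2 e.1 w = e.2}
      = ∑ p : α, Fintype.card {y : α // ∃ z, f2 p z = y} := by
    convert card_edge_sigma (fun x y : α => ∃ w, f2 x w = y)
  have S2 : Fintype.card {e : α × α // ∃ w, f5 e.1 w = e.2}
      = ∑ p : α, Fintype.card {y : α // ∃ z, f4 z p = y} := by
    rw [← C2]
    convert card_edge_sigma (fun x y : α => ∃ w, f4 w x = y)
  have hss : 0 < Fintype.card α * Fintype.card α := Nat.mul_pos hs hs
  have e5pos : 0 < Fintype.card {e : α × α // ∃ w, f5 e.1 w = e.2} :=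
    Nat.pos_of_mul_pos_left (by rw [A p]; exact hss)
  have e2pos : 0 < Fintype.card {e : α × α // ∃ w, f2 e.1 w = e.2} :=
    Nat.pos_of_mul_pos_left (by rw [B p]; exact hss)
  have cA : ∀ q, Fintype.card {y : α // ∃ z, f2 q z = y}
      = Fintype.card {y : α // ∃ z, f2 p z = y} := fun q =>
    Nat.eq_of_mul_eq_mul_right e5pos ((A q).trans (A p).symm)
  have cB : ∀ q, Fintype.card {y : α // ∃ z, f4 z q = y}
      = Fintype.card {y : α // ∃ z, f4 z p = y} := fun q =>
    Nat.eq_of_mul_eq_mul_right e2pos ((B q).trans (B p).symm)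
  rw [Finset.sum_congr rfl (fun q _ => cA q), Finset.sum_const, Finset.card_univ,
    smul_eq_mul] at S1
  rw [Finset.sum_congr rfl (fun q _ => cB q), Finset.sum_const, Finset.card_univ,
    smul_eq_mul] at S2
  refine ⟨_, _, ?_, S1, S2⟩
  have := A p
  rw [S2] at this
  refine Nat.eq_of_mul_eq_mul_left hs ?_
  rw [← this]; ring

open Classical in
lemma count_avoid {ι κ : Type*} [Fintype ι] [DecidableEq ι] (s : ℕ)
    (p : κ → Fin 3 → ι) (pat : κ → Fin 3 → Fin s) (J : Finset κ)
    (hinj : ∀ j ∈ J, Function.Injective (p j))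
    (hdis : ∀ j ∈ J, ∀ j' ∈ J, j ≠ j' → ∀ x y, p j x ≠ p j' y) :
    (Finset.univ.filter (fun w : ι → Fin s => ∀ j ∈ J, ¬ ∀ x, w (p j x) = pat j x)).card
      * (s ^ 3) ^ J.card ≤ (s ^ 3 - 1) ^ J.card * s ^ Fintype.card ι := by
  induction J using Finset.induction_on with
  | empty => simp
  | insert q J hq ih =>
    have ih' := ih (fun j hj => hinj j (Finset.mem_insert_of_mem hj))
      (fun j hj j' hj' => hdis j (Finset.mem_insert_of_mem hj) j' (Finset.mem_insert_of_mem hj'))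
    set A := (Finset.univ.filter (fun w : ι → Fin s => ∀ j ∈ J, ¬ ∀ x, w (p j x) = pat j x))
      with hA
    set A' := (Finset.univ.filter
      (fun w : ι → Fin s => ∀ j ∈ insert q J, ¬ ∀ x, w (p j x) = pat j x)) with hA'
    set D := A.filter (fun w => ∀ x, w (p q x) = pat q x) with hD
    have hsplit : A'.card + D.card = A.card := by
      have h1 : A' = A.filter (fun w => ¬ ∀ x, w (p q x) = pat q x) := by
        ext w
        simp only [hA, hA', Finset.mem_filter, Finset.mem_univ, true_and,
          Finset.forall_mem_insert]
        tauto
      rw [h1, add_comm]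
      exact Finset.card_filter_add_card_filter_not _
    let ov : (ι → Fin s) → (ι → Fin s) := fun w i =>
      if h : ∃ x, p q x = i then pat q h.choose else w i
    have hinjq := hinj q (Finset.mem_insert_self _ _)
    have ov1 : ∀ w x, ov w (p q x) = pat q x := by
      intro w x
      have h : ∃ x', p q x' = p q x := ⟨x, rfl⟩
      simp only [ov, dif_pos h]
      rw [hinjq h.choose_spec]
    have ov2 : ∀ w i, (¬ ∃ x, p q x = i) → ov w i = w i := by
      intro w i h
      simp only [ov, dif_neg h]
    have hmaps : ∀ w ∈ A, ov w ∈ D := by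
      intro w hw
      simp only [hD, hA, Finset.mem_filter, Finset.mem_univ, true_and] at hw ⊢
      refine ⟨fun j hj hall => hw j hj (fun x => ?_), ov1 w⟩
      rw [← hall x, ov2]
      rintro ⟨y, hy⟩
      have hne : q ≠ j := fun h => hq (h ▸ hj)
      exact hdis q (Finset.mem_insert_self _ _) j (Finset.mem_insert_of_mem hj) hne y x hy
    have hfib : A.card ≤ s ^ 3 * D.card := by
      refine Finset.card_le_mul_card_image_of_maps_to hmaps _ ?_
      intro d _
      have : s ^ 3 = (Finset.univ : Finset (Fin 3 → Fin s)).card := by simp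
      rw [this]
      refine Finset.card_le_card_of_injOn (fun w x => w (p q x)) (fun _ _ => by simp) ?_
      intro w hw w' hw' hww
      simp only [Finset.coe_filter, Set.mem_ofPred_eq] at hw hw'
      funext i
      by_cases h : ∃ x, p q x = i
      · obtain ⟨x, rfl⟩ := h
        exact congrFun hww x
      · rw [← ov2 w i h, ← ov2 w' i h, hw.2, hw'.2]
    have step : A'.card * s ^ 3 ≤ (s ^ 3 - 1) * A.card := by
      rcases Nat.eq_zero_or_pos (s ^ 3) with h0 | h0
      · simp [h0]
      · obtain ⟨m, hm⟩ : ∃ m, s ^ 3 = m + 1 := ⟨s ^ 3 - 1, by omega⟩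
        rw [hm] at hfib ⊢
        rw [Nat.add_sub_cancel]
        nlinarith
    rw [Finset.card_insert_of_notMem hq, pow_succ, pow_succ]
    calc A'.card * ((s ^ 3) ^ J.card * s ^ 3)
        = (A'.card * s ^ 3) * (s ^ 3) ^ J.card := by ring
      _ ≤ ((s ^ 3 - 1) * A.card) * (s ^ 3) ^ J.card := Nat.mul_le_mul_right _ step
      _ = (s ^ 3 - 1) * (A.card * (s ^ 3) ^ J.card) := by ring
      _ ≤ (s ^ 3 - 1) * ((s ^ 3 - 1) ^ J.card * s ^ Fintype.card ι) :=
          Nat.mul_le_mul_left _ ih'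
      _ = _ := by ring

/-- A word of a guessing family is determined by `k+1` alternating coordinates. -/
lemma guess_inj {n k s : ℕ} [NeZero n] (hn : n = 2 * k + 1)
    (f : ZMod n → Fin s → Fin s → Fin s) (e : ZMod n) (c c' : ZMod n → Fin s)
    (hc : ∀ i, c i = f i (c (i - 1)) (c (i + 1)))
    (hc' : ∀ i, c' i = f i (c' (i - 1)) (c' (i + 1)))
    (h : ∀ m : ℕ, m ≤ k → c (e + ((2 * m : ℕ) : ZMod n)) = c' (e + ((2 * m : ℕ) : ZMod n))) :
    c = c' := by
  have key : ∀ t : ℕ, t < n → c (e + (t : ZMod n)) = c' (e + (t : ZMod n)) := by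
    intro t ht
    rcases Nat.even_or_odd' t with ⟨m, rfl | rfl⟩
    · exact h m (by omega)
    · rw [hc, hc']
      have e1 : e + ((2 * m + 1 : ℕ) : ZMod n) - 1 = e + ((2 * m : ℕ) : ZMod n) := by
        push_cast; ring
      have e2 : e + ((2 * m + 1 : ℕ) : ZMod n) + 1 = e + ((2 * (m + 1) : ℕ) : ZMod n) := by
        push_cast; ring
      rw [e1, e2, h m (by omega), h (m + 1) (by omega)]
  funext i
  have := key (i - e).val (ZMod.val_lt _)
  simpa using this

open Classical in
lemma edge_bound {n k s : ℕ} [NeZero n] (hn : n = 2 * k + 1) (hk : 1 ≤ k)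
    (f : ZMod n → Fin s → Fin s → Fin s) (F : Finset (ZMod n → Fin s))
    (hF : ∀ c ∈ F, ∀ i, c i = f i (c (i - 1)) (c (i + 1))) (j : ZMod n) :
    F.card ≤ Fintype.card {e : Fin s × Fin s // ∃ w, f j e.1 w = e.2} * s ^ (k - 1) := by
  have hcard : Fintype.card {e : Fin s × Fin s // ∃ w, f j e.1 w = e.2} * s ^ (k - 1)
      = Fintype.card ({e : Fin s × Fin s // ∃ w, f j e.1 w = e.2} × (Fin (k - 1) → Fin s)) := by
    simp [Fintype.card_prod]
  rw [hcard, ← Fintype.card_coe]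
  refine Fintype.card_le_of_injective (fun c : F =>
    (⟨(c.1 (j - 1), c.1 j), c.1 (j + 1), (hF c.1 c.2 j).symm⟩,
      fun m : Fin (k - 1) => c.1 (j + ((2 * (m.1 + 1) : ℕ) : ZMod n)))) ?_
  rintro ⟨c, hc⟩ ⟨c', hc'⟩ h
  simp only [Prod.mk.injEq, Subtype.mk.injEq] at h
  obtain ⟨⟨h1, h2⟩, h3⟩ := h
  refine Subtype.ext (guess_inj hn f j c c' (hF c hc) (hF c' hc') ?_)
  intro m hm
  rcases Nat.eq_zero_or_pos m with rfl | hm0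
  · simpa using h2
  · by_cases hmk : m = k
    · have : j + ((2 * m : ℕ) : ZMod n) = j - 1 := by
        have h0 : ((2 * k + 1 : ℕ) : ZMod n) = 0 := by rw [← hn]; simp
        rw [hmk]
        push_cast at h0 ⊢
        linear_combination h0
      rw [this]; exact h1
    · have := congrFun h3 ⟨m - 1, by omega⟩
      simp only at this
      rwa [show m - 1 + 1 = m by omega] at this

lemma exists_t (s : ℕ) (hs : 2 ≤ s) : ∃ t : ℕ, (s ^ 3 - 1) ^ t * s ≤ (s ^ 3) ^ t := by
  have h3 : 1 ≤ s ^ 3 := Nat.one_le_pow _ _ (by omega)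
  have hpos : (0 : ℝ) < (s : ℝ) ^ 3 := by positivity
  have hs0 : (0 : ℝ) < s := by positivity
  obtain ⟨t, ht⟩ := exists_pow_lt_of_lt_one (x := (1 : ℝ) / s) (by positivity)
    (y := ((s : ℝ) ^ 3 - 1) / (s : ℝ) ^ 3) (by rw [div_lt_one hpos]; linarith)
  refine ⟨t, ?_⟩
  rw [div_pow, div_lt_div_iff₀ (by positivity) hs0] at ht
  have : (((s ^ 3 - 1) ^ t * s : ℕ) : ℝ) ≤ (((s ^ 3) ^ t : ℕ) : ℝ) := by
    push_cast [Nat.cast_sub h3]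
    linarith
  exact_mod_cast this

lemma arith_aux {F A P Q s k : ℕ} (h1 : F ≤ A) (h2 : A * P ≤ Q * s ^ (k + 1)) (h3 : Q * s ≤ P)
    (hp : 0 < P) : F ≤ s ^ k := by
  refine Nat.le_of_mul_le_mul_right ?_ hp
  calc F * P ≤ A * P := Nat.mul_le_mul_right _ h1
    _ ≤ Q * s ^ (k + 1) := h2
    _ = (Q * s) * s ^ k := by rw [pow_succ]; ring
    _ ≤ P * s ^ k := Nat.mul_le_mul_right _ h3
    _ = s ^ k * P := by ring

open Classical in
/-- Many bad vertices of the same parity force the family to be small. -/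
lemma bad_bound {n k s t : ℕ} [NeZero n] (hn : n = 2 * k + 1) (hs : 2 ≤ s)
    (ht : (s ^ 3 - 1) ^ t * s ≤ (s ^ 3) ^ t)
    (f : ZMod n → Fin s → Fin s → Fin s) (F : Finset (ZMod n → Fin s))
    (hF : ∀ c ∈ F, ∀ i, c i = f i (c (i - 1)) (c (i + 1))) (e : ℕ)
    (J : Finset ℕ) (hJ : t ≤ J.card) (M : ℕ → ℕ)
    (hM : ∀ q ∈ J, 6 * q + 1 ≤ M q ∧ M q ≤ 6 * q + 3 ∧ M q + 1 ≤ k)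
    (hbad : ∀ q ∈ J, ¬ Vac (f (((e + 2 * M q : ℕ) : ZMod n) - 1)) (f ((e + 2 * M q : ℕ) : ZMod n))
      (f (((e + 2 * M q : ℕ) : ZMod n) + 1))) :
    F.card ≤ s ^ k := by
  obtain ⟨J, hJs, rfl⟩ := Finset.exists_subset_card_eq hJ
  replace hM := fun q hq => hM q (hJs hq)
  replace hbad := fun q hq => hbad q (hJs hq)
  have hex : ∀ q, ∃ v : Fin 3 → Fin s, q ∈ J →
      f ((e + 2 * M q : ℕ) : ZMod n) (f (((e + 2 * M q : ℕ) : ZMod n) - 1) (v 0) (v 1))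
      (f (((e + 2 * M q : ℕ) : ZMod n) + 1) (v 1) (v 2)) ≠ v 1 := by
    intro q
    by_cases hq : q ∈ J
    · have := hbad q hq
      simp only [Vac, not_forall] at this
      obtain ⟨x, y, z, h⟩ := this
      exact ⟨![x, y, z], fun _ => by simpa using h⟩
    · exact ⟨fun _ => ⟨0, by omega⟩, fun h => absurd h hq⟩
  choose pat hpat using hex
  let p : ℕ → Fin 3 → Fin (k + 1) := fun q x => Fin.ofNat (k + 1) (M q - 1 + x.1)
  have hpv : ∀ q ∈ J, ∀ x, (p q x).1 = M q - 1 + x.1 := by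
    intro q hq x
    have := hM q hq
    have := x.2
    simp only [p, Fin.ofNat]
    exact Nat.mod_eq_of_lt (by omega)
  have hcount := count_avoid s p pat J
    (fun q hq x y hxy => by
      have := congrArg Fin.val hxy
      rw [hpv q hq, hpv q hq] at this
      exact Fin.ext (by omega))
    (fun q hq q' hq' hne x y hxy => by
      have := congrArg Fin.val hxy
      rw [hpv q hq, hpv q' hq'] at this
      have := hM q hq
      have := hM q' hq'
      have := x.2
      have := y.2
      omega)
  have hle : F.card ≤ (Finset.univ.filter (fun w : Fin (k + 1) → Fin s =>
      ∀ j ∈ J, ¬ ∀ x, w (p j x) = pat j x)).card := by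
    refine Finset.card_le_card_of_injOn
      (fun c (m : Fin (k + 1)) => c ((e : ZMod n) + ((2 * m.1 : ℕ) : ZMod n))) ?_ ?_
    · intro c hc
      simp only [Finset.coe_filter, Finset.mem_univ, true_and, Set.mem_ofPred_eq]
      intro q hq hall
      have hMq := hM q hq
      have a0 := hall 0
      have a1 := hall 1
      have a2 := hall 2
      rw [hpv q hq] at a0 a1 a2
      have hc := hF c hc
      set i : ZMod n := ((e + 2 * M q : ℕ) : ZMod n) with hi
      obtain ⟨r, hr⟩ : ∃ r, M q = r + 1 := ⟨M q - 1, by omega⟩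
      have i0 : (e : ZMod n) + ((2 * (M q - 1 + (0 : Fin 3).1) : ℕ) : ZMod n) = i - 1 - 1 := by
        rw [hi, hr]; push_cast; simp; ring
      have i1 : (e : ZMod n) + ((2 * (M q - 1 + (1 : Fin 3).1) : ℕ) : ZMod n) = i := by
        rw [hi, hr]; push_cast; simp
      have i2 : (e : ZMod n) + ((2 * (M q - 1 + (2 : Fin 3).1) : ℕ) : ZMod n) = i + 1 + 1 := by
        rw [hi, hr]; push_cast; simp; ring
      rw [i0] at a0
      rw [i1] at a1
      rw [i2] at a2
      apply hpat q hq
      rw [← a0, ← a1, ← a2, ← hi]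
      have b0 := hc (i - 1)
      have b2 := hc (i + 1)
      rw [sub_add_cancel] at b0
      rw [add_sub_cancel_right] at b2
      rw [← b0, ← b2, ← hc i]
    · intro c hc c' hc' h
      refine guess_inj hn f (e : ZMod n) c c' (hF c hc) (hF c' hc') ?_
      intro m hm
      exact congrFun h ⟨m, by omega⟩
  rw [Fintype.card_fin] at hcount
  have hp : 0 < (s ^ 3) ^ J.card := pow_pos (pow_pos (by omega) _) _
  refine arith_aux hle ?_ ht hp
  convert hcount

open Classical in
lemma indep_bound {n k s t a b : ℕ} [NeZero n] (hn : n = 2 * k + 1) (hs : 2 ≤ s)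
    (hab : a * b = s) (hmin : ∀ d : ℕ, d ∣ s → s ≤ d * d → b ≤ d)
    (ht : (s ^ 3 - 1) ^ t * s ≤ (s ^ 3) ^ t) (hN : 24 * t + 12 < n)
    (F : Finset (ZMod n → Fin s))
    (hind : ∀ c ∈ F, ∀ c' ∈ F, ¬ (confusionGraph n s).Adj c c') :
    F.card ≤ a * s ^ k := by
  have hf : ∀ (i : ZMod n) (x y : Fin s), ∃ z, ∀ c ∈ F, c (i - 1) = x → c (i + 1) = y → c i = z := by
    intro i x y
    by_cases h : ∃ c ∈ F, c (i - 1) = x ∧ c (i + 1) = y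
    · obtain ⟨c, hc, hx, hy⟩ := h
      refine ⟨c i, fun c' hc' hx' hy' => ?_⟩
      by_contra hne
      exact hind c' hc' c hc ⟨i, hne, hx'.trans hx.symm, hy'.trans hy.symm⟩
    · exact ⟨x, fun c hc hx hy => absurd ⟨c, hc, hx, hy⟩ h⟩
  choose f hf using hf
  have hF : ∀ c ∈ F, ∀ i, c i = f i (c (i - 1)) (c (i + 1)) :=
    fun c hc i => hf i _ _ c hc rfl rfl
  have ha : 1 ≤ a := by
    rcases Nat.eq_zero_or_pos a with h | h
    · simp [h] at hab; omega
    · exact h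
  have hb : 1 ≤ b := by
    rcases Nat.eq_zero_or_pos b with h | h
    · simp [h] at hab; omega
    · exact h
  by_cases hgood : ∃ i : ZMod n, ∀ d : ℕ, 1 ≤ d → d ≤ 5 →
      Vac (f (i + d - 1)) (f (i + d)) (f (i + d + 1))
  · obtain ⟨i, hi⟩ := hgood
    have : Nonempty (Fin s) := ⟨⟨0, by omega⟩⟩
    have g1 := hi 1 (by omega) (by omega)
    have g2 := hi 2 (by omega) (by omega)
    have g3 := hi 3 (by omega) (by omega)
    have g4 := hi 4 (by omega) (by omega)
    have g5 := hi 5 (by omega) (by omega)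
    push_cast at g1 g2 g3 g4 g5
    rw [show i + 1 - 1 = i by ring, show i + 1 + 1 = i + 2 by ring] at g1
    rw [show i + 2 - 1 = i + 1 by ring, show i + 2 + 1 = i + 3 by ring] at g2
    rw [show i + 3 - 1 = i + 2 by ring, show i + 3 + 1 = i + 4 by ring] at g3
    rw [show i + 4 - 1 = i + 3 by ring, show i + 4 + 1 = i + 5 by ring] at g4
    rw [show i + 5 - 1 = i + 4 by ring, show i + 5 + 1 = i + 6 by ring] at g5
    obtain ⟨r, l, hrl, hr, hl⟩ := vac_struct _ _ _ _ _ _ _ g1 g2 g3 g4 g5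
    have B1 : F.card ≤ Fintype.card (Fin s) * r * s ^ (k - 1) := by
      rw [← hr]
      convert edge_bound hn (by omega) f F hF (i + 2)
    have B2 : F.card ≤ Fintype.card (Fin s) * l * s ^ (k - 1) := by
      rw [← hl]
      convert edge_bound hn (by omega) f F hF (i + 5)
    rw [Fintype.card_fin] at B1 B2 hrl
    have hk : s ^ k = s * s ^ (k - 1) := by
      rw [← pow_succ', Nat.sub_add_cancel (by omega)]
    have fin : ∀ r l : ℕ, r * l = s → s ≤ l * l → F.card ≤ s * r * s ^ (k - 1) →
        F.card ≤ a * s ^ k := by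
      intro r l h1 h2 h3
      have hbl : b ≤ l := hmin l ⟨r, by rw [← h1]; ring⟩ h2
      have hra : r ≤ a := by
        refine Nat.le_of_mul_le_mul_right (c := b) ?_ hb
        rw [hab, ← h1]
        exact Nat.mul_le_mul_left _ hbl
      refine h3.trans ?_
      rw [hk]
      calc s * r * s ^ (k - 1) = r * (s * s ^ (k - 1)) := by ring
        _ ≤ _ := Nat.mul_le_mul_right _ hra
    rcases le_total r l with h | h
    · exact fin r l hrl (by rw [← hrl]; exact Nat.mul_le_mul_right _ h) B1
    · exact fin l r (by rw [← hrl]; ring) (by rw [← hrl]; exact Nat.mul_le_mul_left _ h) B2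
  · push Not at hgood
    have hbd : ∀ q : ℕ, ∃ d : ℕ, 1 ≤ d ∧ d ≤ 5 ∧
        ¬ Vac (f (((12 * q + 2 + d : ℕ) : ZMod n) - 1)) (f ((12 * q + 2 + d : ℕ) : ZMod n))
          (f (((12 * q + 2 + d : ℕ) : ZMod n) + 1)) := by
      intro q
      obtain ⟨d, h1, h2, h3⟩ := hgood ((12 * q + 2 : ℕ) : ZMod n)
      refine ⟨d, h1, h2, ?_⟩
      rwa [Nat.cast_add (12 * q + 2) d]
    choose d hd1 hd2 hd3 using hbd
    have main : F.card ≤ s ^ k := by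
      have hsum := Finset.card_filter_add_card_filter_not (s := Finset.range (2 * t))
        (fun q => d q % 2 = 0)
      rw [Finset.card_range] at hsum
      have fin : ∀ e : ℕ, e < 2 → t ≤ ((Finset.range (2 * t)).filter (fun q => d q % 2 = e)).card →
          F.card ≤ s ^ k := by
        intro e he hcard
        refine bad_bound hn hs ht f F hF e _ hcard (fun q => 6 * q + 1 + (d q - e) / 2) ?_ ?_
        · intro q hq
          simp only [Finset.mem_filter, Finset.mem_range] at hq
          have := hd1 q
          have := hd2 q
          refine ⟨?_, ?_, ?_⟩ <;> omega
        · intro q hq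
          simp only [Finset.mem_filter, Finset.mem_range] at hq
          have := hd1 q
          have := hd2 q
          have heq : e + 2 * (6 * q + 1 + (d q - e) / 2) = 12 * q + 2 + d q := by omega
          rw [heq]
          exact hd3 q
      by_cases h : t ≤ ((Finset.range (2 * t)).filter (fun q => d q % 2 = 0)).card
      · exact fin 0 (by omega) h
      · refine fin 1 (by omega) ?_
        have : (Finset.range (2 * t)).filter (fun q => d q % 2 = 1)
            = (Finset.range (2 * t)).filter (fun q => ¬ d q % 2 = 0) := by
          refine Finset.filter_congr (fun q _ => ?_)
          omega
        rw [this]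
        omega
    exact main.trans (Nat.le_mul_of_pos_left _ ha)

lemma upper_color {n k s a b : ℕ} [NeZero n] (hn : n = 2 * k + 1) (hk : 1 ≤ k) (hs : 2 ≤ s)
    (hab : a * b = s) (hle : a ≤ b) : (confusionGraph n s).Colorable (b * s ^ k) := by
  have ha : a ≠ 0 := by rintro rfl; simp at hab; omega
  have hb : b ≠ 0 := by rintro rfl; simp at hab; omega
  have : NeZero a := ⟨ha⟩
  have : NeZero b := ⟨hb⟩
  have φ : Fin s ≃ ZMod a × ZMod b := Fintype.equivOfCardEq (by simp [ZMod.card, hab])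
  obtain ⟨g⟩ : Nonempty (ZMod a ↪ ZMod b) :=
    Function.Embedding.nonempty_of_card_le (by simpa [ZMod.card] using hle)
  let u : Fin s → ZMod a := fun x => (φ x).1
  let v : Fin s → ZMod b := fun x => (φ x).2
  have huv : ∀ x y, u x = u y → v x = v y → x = y := fun x y h1 h2 =>
    φ.injective (Prod.ext h1 h2)
  let X : (ZMod n → Fin s) → (Fin k → ZMod a) × (Fin k → ZMod b) × ZMod b := fun c =>
    (fun m => u (c ((2 * m.1 + 1 : ℕ) : ZMod n)) + u (c ((2 * m.1 + 2 : ℕ) : ZMod n)),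
     fun m => v (c ((2 * m.1 : ℕ) : ZMod n)) + v (c ((2 * m.1 + 1 : ℕ) : ZMod n)),
     v (c ((2 * k : ℕ) : ZMod n)) + g (u (c 0)))
  have h0 : ((2 * k + 1 : ℕ) : ZMod n) = 0 := by rw [← hn]; simp
  have hX : ∀ c c', (confusionGraph n s).Adj c c' → X c ≠ X c' := by
    rintro c c' ⟨i, hne, hl, hr⟩ hXX
    simp only [X, Prod.mk.injEq] at hXX
    obtain ⟨H1, H2, H3⟩ := hXX
    replace H1 := fun (m : ℕ) (hm : m < k) => congrFun H1 ⟨m, hm⟩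
    replace H2 := fun (m : ℕ) (hm : m < k) => congrFun H2 ⟨m, hm⟩
    simp only at H1 H2
    apply hne
    obtain ⟨t, ht, rfl⟩ : ∃ t : ℕ, t < n ∧ (t : ZMod n) = i := ⟨i.val, ZMod.val_lt i, by simp⟩
    rcases Nat.eq_zero_or_pos t with rfl | htp
    · have e1 : ((0 : ℕ) : ZMod n) + 1 = ((2 * 0 + 1 : ℕ) : ZMod n) := by simp
      have e2 : ((0 : ℕ) : ZMod n) - 1 = ((2 * k : ℕ) : ZMod n) := by
        push_cast at h0 ⊢
        linear_combination -h0
      rw [e1] at hr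
      rw [e2] at hl
      have q2 := H2 0 (by omega)
      rw [hr] at q2
      rw [hl] at H3
      refine huv _ _ ?_ ?_
      · simpa using g.injective (add_left_cancel H3)
      · simpa using add_right_cancel q2
    · rcases Nat.even_or_odd' t with ⟨m, rfl | rfl⟩
      · obtain ⟨r, rfl⟩ : ∃ r, m = r + 1 := ⟨m - 1, by omega⟩
        have e2 : ((2 * (r + 1) : ℕ) : ZMod n) - 1 = ((2 * r + 1 : ℕ) : ZMod n) := by
          push_cast; ring
        have e1 : ((2 * (r + 1) : ℕ) : ZMod n) + 1 = ((2 * (r + 1) + 1 : ℕ) : ZMod n) := by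
          push_cast; ring
        rw [e1] at hr
        rw [e2] at hl
        have q1 := H1 r (by omega)
        rw [hl] at q1
        refine huv _ _ (add_left_cancel q1) ?_
        by_cases hrk : r + 1 = k
        · rw [hrk, h0] at hr
          rw [hr] at H3
          rw [hrk]
          exact add_right_cancel H3
        · have q2 := H2 (r + 1) (by omega)
          rw [hr] at q2
          exact add_right_cancel q2
      · have e2 : ((2 * m + 1 : ℕ) : ZMod n) - 1 = ((2 * m : ℕ) : ZMod n) := by
          push_cast; ring
        have e1 : ((2 * m + 1 : ℕ) : ZMod n) + 1 = ((2 * m + 2 : ℕ) : ZMod n) := by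
          push_cast; ring
        rw [e1] at hr
        rw [e2] at hl
        have q1 := H1 m (by omega)
        have q2 := H2 m (by omega)
        rw [hr] at q1
        rw [hl] at q2
        exact huv _ _ (add_right_cancel q1) (add_left_cancel q2)
  have hcol := (SimpleGraph.Coloring.mk X (fun {c c'} h => hX c c' h)).colorable
  have hc : Fintype.card ((Fin k → ZMod a) × (Fin k → ZMod b) × ZMod b) = b * s ^ k := by
    simp only [Fintype.card_prod, Fintype.card_fun, ZMod.card, Fintype.card_fin]
    rw [← hab, mul_pow]; ring
  rwa [hc] at hcol

/-- For every integer `s ≥ 2`, let `b` be the smallest divisor of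
`s` with `b ≥ √s`.  There is an `N` such that for every odd `n > N` (with `n ≥ 3`),
the chromatic number of the confusion graph `𝔠_s(C_n)` equals `b · s^{(n-1)/2}`
(equivalently, the information defect satisfies `β(C_n,s) = (n-1)/2 + log_s b`). -/
theorem cycle_guessing_stmt19 (s b : ℕ) (hs : 2 ≤ s)
    (hb : b ∣ s ∧ s ≤ b * b ∧ ∀ d : ℕ, d ∣ s → s ≤ d * d → b ≤ d) :
    ∃ N : ℕ, ∀ (n : ℕ) [NeZero n], N < n → Odd n → 3 ≤ n →
      (confusionGraph n s).chromaticNumber = (b * s ^ ((n - 1) / 2) : ℕ) := by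
  obtain ⟨⟨a, hab⟩, hbb, hmin⟩ := hb
  rw [mul_comm] at hab
  obtain ⟨t, ht⟩ := exists_t s hs
  refine ⟨24 * t + 12, ?_⟩
  intro n _ hN hodd hn3
  obtain ⟨k, hk⟩ := hodd
  have hkk : (n - 1) / 2 = k := by omega
  rw [hkk]
  have hb0 : 0 < b := by
    rcases Nat.eq_zero_or_pos b with h | h
    · simp [h] at hab; omega
    · exact h
  have hle : a ≤ b := by
    refine Nat.le_of_mul_le_mul_right (c := b) ?_ hb0
    rw [← hab]; exact hbb
  have ha0 : 0 < a := by
    rcases Nat.eq_zero_or_pos a with h | h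
    · simp [h] at hab; omega
    · exact h
  have hup := upper_color (n := n) hk (by omega) hs hab.symm hle
  refine le_antisymm hup.chromaticNumber_le ?_
  refine SimpleGraph.le_chromaticNumber_iff_colorable.2 ?_
  intro m hm
  classical
  obtain ⟨C⟩ := hm
  have hcard : Fintype.card (ZMod n → Fin s) ≤ (a * s ^ k) * m := by
    have := Finset.card_le_mul_card_image_of_maps_to
      (s := (Finset.univ : Finset (ZMod n → Fin s))) (t := (Finset.univ : Finset (Fin m)))
      (f := fun c => C c) (fun _ _ => Finset.mem_univ _) (a * s ^ k) (by
        intro x _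
        refine indep_bound hk hs hab.symm hmin ht hN _ ?_
        intro c hc c' hc' hadj
        simp only [Finset.mem_filter, Finset.mem_univ, true_and] at hc hc'
        exact C.valid hadj (hc.trans hc'.symm))
    simpa using this
  have hc : Fintype.card (ZMod n → Fin s) = (a * s ^ k) * (b * s ^ k) := by
    rw [Fintype.card_fun, ZMod.card, Fintype.card_fin, hk]
    calc s ^ (2 * k + 1) = s * (s ^ k * s ^ k) := by ring
      _ = (a * b) * (s ^ k * s ^ k) := by rw [← hab]
      _ = _ := by ring
  rw [hc] at hcard
  exact Nat.le_of_mul_le_mul_left hcard (by positivity)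
end
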